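/- arXiv:2510.17455 — 2 statements merged into one kernel-verified Lean document; each statement's English description precedes it below -/
import Mathlib

section
/- Let d ≥ 1. Let f : ℝ^d × ℝ^d → (0,∞) be a probability density (in the variables (x,ξ)), continuously differentiable in ξ, with ∫∫ |ξ|² f dx dξ < ∞ and ∫∫ (1/f)|∇_ξ f + (ξ − u_f) f|² dx dξ < ∞. Let ρ : ℝ^d → [0,∞) be a probability density and let u : ℝ^d → ℝ^d be Lipschitz with Lipschitz constant L, and assume ∫ ρ_f |u_f − u|² dx < ∞. Then there exists a constant C > 0 depending only on d and L such that d_BL( f dx dξ , M_{ρ(x),u(x)}(ξ) dx dξ )² ≤ C ( ∫∫ (1/f)|∇_ξ f + (ξ − u_f) f|² dx dξ + ∫ ρ_f |u_f − u|² dx + d_BL( ρ_f dx , ρ dx )² ). -/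
open MeasureTheory Real
open scoped RealInnerProductSpace

/-- The local Maxwellian `M_{ρ,u}(ξ) = ρ (2π)^{-d/2} exp(-|ξ-u|²/2)`. -/
noncomputable def maxwellian (d : ℕ) (ρ : ℝ) (u ξ : EuclideanSpace ℝ (Fin d)) : ℝ :=
  ρ * (2 * π) ^ (-(d : ℝ) / 2) * Real.exp (-‖ξ - u‖ ^ 2 / 2)

/-- The bounded Lipschitz distance between two finite Borel measures:
`d_BL(μ,ν) = sup{ |∫ φ dμ − ∫ φ dν| : ‖φ‖_∞ + Lip(φ) ≤ 1 }`. -/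
noncomputable def dBL {X : Type*} [MeasurableSpace X] [PseudoMetricSpace X]
    (μ ν : Measure X) : ℝ :=
  sSup {r : ℝ | ∃ φ : X → ℝ,
    (∃ C L : NNReal, (∀ x, |φ x| ≤ C) ∧ LipschitzWith L φ ∧ (C : ℝ) + L ≤ 1) ∧
    r = |(∫ x, φ x ∂μ) - ∫ x, φ x ∂ν|}

/-- Macroscopic density `ρ_f(x) = ∫ f(x,ξ) dξ` of a kinetic distribution. -/
noncomputable def macroDensity (d : ℕ)
    (f : EuclideanSpace ℝ (Fin d) × EuclideanSpace ℝ (Fin d) → ℝ)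
    (x : EuclideanSpace ℝ (Fin d)) : ℝ :=
  ∫ ξ, f (x, ξ)

/-- Macroscopic velocity `u_f(x) = ρ_f(x)⁻¹ ∫ ξ f(x,ξ) dξ`, equal to `0` where `ρ_f(x) = 0`. -/
noncomputable def macroVelocity (d : ℕ)
    (f : EuclideanSpace ℝ (Fin d) × EuclideanSpace ℝ (Fin d) → ℝ)
    (x : EuclideanSpace ℝ (Fin d)) : EuclideanSpace ℝ (Fin d) :=
  (macroDensity d f x)⁻¹ • ∫ ξ, f (x, ξ) • ξ

/-- standard Gaussian density -/
noncomputable def gau (d : ℕ) (z : EuclideanSpace ℝ (Fin d)) : ℝ :=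
  (2 * π) ^ (-(d : ℝ) / 2) * Real.exp (-‖z‖ ^ 2 / 2)

lemma maxwellian_eq (d : ℕ) (ρ : ℝ) (u ξ : EuclideanSpace ℝ (Fin d)) :
    maxwellian d ρ u ξ = ρ * gau d (ξ - u) := by
  simp [maxwellian, gau, mul_assoc]

lemma gau_pos (d : ℕ) (z : EuclideanSpace ℝ (Fin d)) : 0 < gau d z := by
  unfold gau; positivity

lemma gau_cont (d : ℕ) : Continuous (gau d) := by
  unfold gau; fun_prop

lemma gau_neg (d : ℕ) (z : EuclideanSpace ℝ (Fin d)) : gau d (-z) = gau d z := by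
  simp [gau]

lemma exp_int (d : ℕ) {b : ℝ} (hb : 0 < b) :
    Integrable (fun z : EuclideanSpace ℝ (Fin d) => Real.exp (-b * ‖z‖ ^ 2)) := by
  by_contra h
  have h1 := integral_undef h
  rw [GaussianFourier.integral_rexp_neg_mul_sq_norm hb] at h1
  have : 0 < (π / b) ^ (Module.finrank ℝ (EuclideanSpace ℝ (Fin d)) / 2 : ℝ) := by positivity
  linarith

lemma gau_int (d : ℕ) : Integrable (gau d) := by
  have := (exp_int d (b := 1 / 2) (by norm_num)).const_mul ((2 * π) ^ (-(d : ℝ) / 2))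
  refine this.congr (Filter.Eventually.of_forall fun z => ?_)
  simp only [gau]; congr 2; ring

lemma gau_integral (d : ℕ) : ∫ z, gau d z = 1 := by
  have h := GaussianFourier.integral_rexp_neg_mul_sq_norm
    (V := EuclideanSpace ℝ (Fin d)) (b := 1 / 2) (by norm_num)
  have e : ∀ z, gau d z = (2 * π) ^ (-(d : ℝ) / 2) * Real.exp (-(1 / 2) * ‖z‖ ^ 2) := by
    intro z; simp only [gau]; congr 2; ring
  simp_rw [e]
  rw [integral_const_mul, h, finrank_euclideanSpace_fin]
  have : π / (1 / 2) = 2 * π := by ring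
  rw [this, ← Real.rpow_add (by positivity)]
  rw [show -(d : ℝ) / 2 + d / 2 = 0 by ring, Real.rpow_zero]

lemma gau_norm_int (d : ℕ) : Integrable (fun z => ‖z‖ * gau d z) := by
  have := (exp_int d (b := 1 / 4) (by norm_num)).const_mul ((2 * π) ^ (-(d : ℝ) / 2))
  refine this.mono' (by have := gau_cont d; fun_prop) (Filter.Eventually.of_forall fun z => ?_)
  have hg := gau_pos d z
  rw [Real.norm_of_nonneg (by positivity)]
  have h1 : ‖z‖ ≤ Real.exp (‖z‖ ^ 2 / 4) := by
    have := Real.add_one_le_exp (‖z‖ ^ 2 / 4)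
    nlinarith [sq_nonneg (‖z‖ / 2 - 1)]
  have h2 : Real.exp (-(1 / 4) * ‖z‖ ^ 2) =
      Real.exp (‖z‖ ^ 2 / 4) * Real.exp (-‖z‖ ^ 2 / 2) := by
    rw [← Real.exp_add]; congr 1; ring
  rw [h2]; unfold gau
  calc _ ≤ Real.exp (‖z‖ ^ 2 / 4) * ((2 * π) ^ (-(d : ℝ) / 2) * Real.exp (-‖z‖ ^ 2 / 2)) := by
        gcongr
    _ = _ := by ring

lemma shear1 {E : Type*} [NormedAddCommGroup E] [InnerProductSpace ℝ E] [FiniteDimensional ℝ E]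
    [MeasurableSpace E] [BorelSpace E] (a : ℝ) :
    MeasurePreserving (fun p : E × E => (p.1, a • p.1 + p.2)) := by
  refine MeasurePreserving.skew_product (g := fun x y => a • x + y) (MeasurePreserving.id volume)
    (by unfold Function.uncurry; fun_prop) (Filter.Eventually.of_forall fun x => ?_)
  exact map_add_left_eq_self _ _

lemma shear2 {E : Type*} [NormedAddCommGroup E] [InnerProductSpace ℝ E] [FiniteDimensional ℝ E]
    [MeasurableSpace E] [BorelSpace E] (a : ℝ) :
    MeasurePreserving (fun p : E × E => (p.1 + a • p.2, p.2)) := by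
  have hs : MeasurePreserving (Prod.swap : E × E → E × E) := Measure.measurePreserving_swap
  have := hs.comp ((shear1 a).comp hs)
  convert this using 1
  ext p <;> simp [add_comm]

lemma rot_mp {E : Type*} [NormedAddCommGroup E] [InnerProductSpace ℝ E] [FiniteDimensional ℝ E]
    [MeasurableSpace E] [BorelSpace E] (c s : ℝ) (hs : s ≠ 0) (h : c ^ 2 + s ^ 2 = 1) :
    MeasurePreserving (fun p : E × E => (c • p.1 - s • p.2, s • p.1 + c • p.2)) := by
  have := (shear2 (E := E) ((c - 1) / s)).comp ((shear1 s).comp (shear2 ((c - 1) / s)))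
  convert this using 1
  have e1 : (c - 1) / s * s = c - 1 := by field_simp
  have e2 : (c - 1) / s * ((c - 1) / s * s) + 2 * ((c - 1) / s) = - s := by
    field_simp; linarith
  funext p
  have k : (c - 1) / s + ((c - 1) / s * (s * ((c - 1) / s)) + (c - 1) / s) = -s := by
    rw [← e2]; ring
  refine Prod.ext ?_ ?_
  · simp only [Function.comp, smul_add, smul_smul]
    rw [e1, show c • p.1 - s • p.2 = c • p.1 + (-s) • p.2 by module, ← k]
    module
  · simp only [Function.comp, smul_add, smul_smul]
    rw [mul_comm s, e1]
    module

lemma gau_hasGrad (d : ℕ) (z : ℝ → EuclideanSpace ℝ (Fin d)) (t : ℝ)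
    (w : EuclideanSpace ℝ (Fin d)) (hz : HasDerivAt z w t) :
    HasDerivAt (fun t => gau d (z t)) (-⟪z t, w⟫ * gau d (z t)) t := by
  have h1 := hz.norm_sq
  have h2 := (((h1.neg).div_const 2).exp).const_mul ((2 * π) ^ (-(d : ℝ) / 2))
  unfold gau
  refine HasDerivAt.congr_deriv h2 ?_
  simp only [Pi.neg_apply]
  ring

lemma avg_bound {Ω : Type*} [TopologicalSpace Ω] [SecondCountableTopology Ω] [MeasurableSpace Ω]
    [BorelSpace Ω] (μ : Measure Ω) [SFinite μ] (Q : Ω → ℝ) (hQc : Continuous Q)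
    (hQ0 : ∀ p, 0 ≤ Q p) (hQi : Integrable Q μ) (R : ℝ → Ω → Ω)
    (hR : Continuous (Function.uncurry R)) (T : ℝ) (hT : 0 ≤ T)
    (hmp : ∀ t ∈ Set.Ioc 0 T, MeasurePreserving (R t) μ μ) :
    ∫⁻ p, (∫⁻ t in Set.Ioc 0 T, ENNReal.ofReal (Q (R t p))) ∂μ = ENNReal.ofReal (T * ∫ p, Q p ∂μ) := by
  have hc : Continuous fun q : Ω × ℝ => ENNReal.ofReal (Q (Function.uncurry R q.swap)) :=
    ENNReal.continuous_ofReal.comp (hQc.comp (hR.comp continuous_swap))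
  rw [lintegral_lintegral_swap hc.measurable.aemeasurable]
  have h1 : ∫⁻ t in Set.Ioc 0 T, (∫⁻ p, ENNReal.ofReal (Q (R t p)) ∂μ)
      = ∫⁻ t in Set.Ioc 0 T, (∫⁻ p, ENNReal.ofReal (Q p) ∂μ) := by
    refine setLIntegral_congr_fun measurableSet_Ioc fun t ht => ?_
    exact (hmp t ht).lintegral_comp (f := fun p => ENNReal.ofReal (Q p)) (by fun_prop)
  rw [h1, ← ofReal_integral_eq_lintegral_ofReal hQi (Filter.Eventually.of_forall hQ0)]
  simp only [lintegral_const, Measure.restrict_apply MeasurableSet.univ, Set.univ_inter,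
    Real.volume_Ioc, sub_zero]
  rw [mul_comm, ← ENNReal.ofReal_mul hT]

set_option maxHeartbeats 1000000 in
/-- kernel lemma: total variation bound by relative Fisher-type quantity -/
lemma tv_bound (d : ℕ) (h g : EuclideanSpace ℝ (Fin d) → ℝ) (hh : ContDiff ℝ 1 h)
    (hi : Integrable h) (hg : Continuous g) (hg1 : ∀ x, |g x| ≤ 1)
    (hD : Integrable fun ξ => ‖gradient h ξ + h ξ • ξ‖) :
    |(∫ ξ, g ξ * h ξ) - (∫ ξ, h ξ) * ∫ ξ, g ξ * gau d ξ|
      ≤ (π / 2 * ∫ z, ‖z‖ * gau d z) * ∫ ξ, ‖gradient h ξ + h ξ • ξ‖ := by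
  have hgc : Continuous (gradient h) := by
    unfold gradient
    exact (InnerProductSpace.toDual ℝ (EuclideanSpace ℝ (Fin d))).symm.continuous.comp (hh.continuous_fderiv (by norm_num))
  have hhc := hh.continuous
  have hgau := gau_cont d
  set D : EuclideanSpace ℝ (Fin d) → ℝ := fun ξ => ‖gradient h ξ + h ξ • ξ‖ with hDdef
  have hDc : Continuous D := by simp only [hDdef]; fun_prop
  set Q : EuclideanSpace ℝ (Fin d) × EuclideanSpace ℝ (Fin d) → ℝ := fun p => D p.1 * (‖p.2‖ * gau d p.2) with hQ
  have hQc : Continuous Q := by simp only [hQ]; fun_prop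
  have hQ0 : ∀ p, 0 ≤ Q p := fun p =>
    mul_nonneg (norm_nonneg _) (mul_nonneg (norm_nonneg _) (gau_pos d _).le)
  have hQi : Integrable Q := hD.mul_prod (gau_norm_int d)
  have hQI : ∫ p, Q p = (∫ ξ, D ξ) * ∫ z, ‖z‖ * gau d z :=
    integral_prod_mul (μ := (volume : Measure (EuclideanSpace ℝ (Fin d))))
      (ν := (volume : Measure (EuclideanSpace ℝ (Fin d)))) D (fun z => ‖z‖ * gau d z)
  let R : ℝ → EuclideanSpace ℝ (Fin d) × EuclideanSpace ℝ (Fin d) → EuclideanSpace ℝ (Fin d) × EuclideanSpace ℝ (Fin d) := fun t p =>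
    (cos t • p.1 - sin t • p.2, sin t • p.1 + cos t • p.2)
  have hRc : Continuous (Function.uncurry R) := by
    simp only [R, Function.uncurry_def]; fun_prop
  -- the pointwise FTC estimate
  have key : ∀ p : EuclideanSpace ℝ (Fin d) × EuclideanSpace ℝ (Fin d), ‖h p.1 * gau d p.2 - h (-p.2) * gau d p.1‖ₑ
      ≤ ∫⁻ t in Set.Ioc 0 (π / 2), ENNReal.ofReal (Q (R t p)) := by
    intro p
    let F' : ℝ → ℝ := fun t => -(⟪gradient h (R t p).1 + h (R t p).1 • (R t p).1, (R t p).2⟫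
      * gau d (R t p).2)
    have hRp : Continuous fun t => R t p := by simp only [R]; fun_prop
    have hF'c : Continuous F' := by simp only [F']; fun_prop
    have hder : ∀ t, HasDerivAt (fun t => h (R t p).1 * gau d (R t p).2) (F' t) t := by
      intro t
      have d1 : HasDerivAt (fun t => (R t p).1) (-(R t p).2) t := by
        have := ((hasDerivAt_cos t).smul_const p.1).sub ((hasDerivAt_sin t).smul_const p.2)
        refine HasDerivAt.congr_deriv this ?_
        simp only [R]; module
      have d2 : HasDerivAt (fun t => (R t p).2) ((R t p).1) t := by
        have := ((hasDerivAt_sin t).smul_const p.1).add ((hasDerivAt_cos t).smul_const p.2)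
        refine HasDerivAt.congr_deriv this ?_
        simp only [R]; module
      have d3 : HasDerivAt (fun t => h (R t p).1) (⟪gradient h (R t p).1, -(R t p).2⟫) t := by
        have hd := (hh.differentiable (by norm_num) (R t p).1).hasFDerivAt
        have := hd.comp_hasDerivAt t d1
        refine HasDerivAt.congr_deriv this ?_
        simp [gradient]
      have d4 := gau_hasGrad d (fun t => (R t p).2) t _ d2
      refine HasDerivAt.congr_deriv (d3.mul d4) ?_
      simp only [F', inner_neg_right, inner_add_left, real_inner_smul_left,
        real_inner_comm (R t p).2 (R t p).1]
      ring
    have ftc := intervalIntegral.integral_eq_sub_of_hasDerivAt (a := 0) (b := π / 2)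
      (fun t _ => hder t) (hF'c.intervalIntegrable _ _)
    have e : h p.1 * gau d p.2 - h (-p.2) * gau d p.1 = - ∫ t in (0)..(π / 2), F' t := by
      rw [ftc]; simp [R]
    rw [e, enorm_neg, intervalIntegral.integral_of_le (by positivity)]
    refine (enorm_integral_le_lintegral_enorm _).trans (lintegral_mono fun t => ?_)
    rw [← ofReal_norm]
    refine ENNReal.ofReal_le_ofReal ?_
    have hi1 := norm_inner_le_norm (𝕜 := ℝ)
      (gradient h (R t p).1 + h (R t p).1 • (R t p).1) (R t p).2
    have hgp := (gau_pos d (R t p).2).le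
    have : ‖F' t‖ = ‖⟪gradient h (R t p).1 + h (R t p).1 • (R t p).1, (R t p).2⟫‖
        * gau d (R t p).2 := by
      simp only [F']
      rw [norm_neg, norm_mul, Real.norm_of_nonneg hgp]
    rw [this]
    calc _ ≤ _ := mul_le_mul_of_nonneg_right hi1 hgp
      _ = _ := by simp only [Q, D]; ring
  have hA : Integrable fun p : EuclideanSpace ℝ (Fin d) × EuclideanSpace ℝ (Fin d) => (g p.1 * h p.1) * gau d p.2 :=
    (hi.bdd_mul (c := 1) hg.aestronglyMeasurable (Filter.Eventually.of_forall hg1)).mul_prod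
      (gau_int d)
  have hB : Integrable fun p : EuclideanSpace ℝ (Fin d) × EuclideanSpace ℝ (Fin d) => (g p.1 * gau d p.1) * h (-p.2) :=
    ((gau_int d).bdd_mul (c := 1) hg.aestronglyMeasurable
      (Filter.Eventually.of_forall hg1)).mul_prod hi.comp_neg
  have hIA : ∫ p : EuclideanSpace ℝ (Fin d) × EuclideanSpace ℝ (Fin d), (g p.1 * h p.1) * gau d p.2 = ∫ ξ, g ξ * h ξ := by
    have := integral_prod_mul (μ := (volume : Measure (EuclideanSpace ℝ (Fin d)))) (ν := (volume : Measure (EuclideanSpace ℝ (Fin d))))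
      (fun x => g x * h x) (gau d)
    rw [gau_integral, mul_one] at this
    exact this
  have hIB : ∫ p : EuclideanSpace ℝ (Fin d) × EuclideanSpace ℝ (Fin d), (g p.1 * gau d p.1) * h (-p.2)
      = (∫ ξ, h ξ) * ∫ ξ, g ξ * gau d ξ := by
    have := integral_prod_mul (μ := (volume : Measure (EuclideanSpace ℝ (Fin d)))) (ν := (volume : Measure (EuclideanSpace ℝ (Fin d))))
      (fun x => g x * gau d x) (fun y => h (-y))
    rw [integral_neg_eq_self h, mul_comm] at this
    exact this
  rw [← hIA, ← hIB, ← integral_sub hA hB]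
  have main : ‖∫ p : EuclideanSpace ℝ (Fin d) × EuclideanSpace ℝ (Fin d), (g p.1 * h p.1) * gau d p.2 - (g p.1 * gau d p.1) * h (-p.2)‖ₑ
      ≤ ENNReal.ofReal ((π / 2 * ∫ z, ‖z‖ * gau d z) * ∫ ξ, D ξ) := by
    calc _ ≤ ∫⁻ p : EuclideanSpace ℝ (Fin d) × EuclideanSpace ℝ (Fin d), ‖(g p.1 * h p.1) * gau d p.2 - (g p.1 * gau d p.1) * h (-p.2)‖ₑ :=
          enorm_integral_le_lintegral_enorm _
      _ ≤ ∫⁻ p : EuclideanSpace ℝ (Fin d) × EuclideanSpace ℝ (Fin d), ∫⁻ t in Set.Ioc 0 (π / 2), ENNReal.ofReal (Q (R t p)) := by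
          refine lintegral_mono fun p => ?_
          refine le_trans ?_ (key p)
          have : (g p.1 * h p.1) * gau d p.2 - (g p.1 * gau d p.1) * h (-p.2)
            = g p.1 * (h p.1 * gau d p.2 - h (-p.2) * gau d p.1) := by ring
          simp only [this]
          rw [← ofReal_norm, ← ofReal_norm]
          refine ENNReal.ofReal_le_ofReal ?_
          rw [norm_mul]
          exact mul_le_of_le_one_left (norm_nonneg _) (hg1 _)
      _ = ENNReal.ofReal (π / 2 * ∫ p, Q p) := by
          refine avg_bound volume Q hQc hQ0 hQi R hRc (π / 2) (by positivity) fun t ht => ?_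
          have hs : sin t ≠ 0 :=
            (sin_pos_of_pos_of_lt_pi ht.1 (by linarith [ht.2, pi_pos])).ne'
          exact rot_mp (cos t) (sin t) hs (cos_sq_add_sin_sq t)
      _ = _ := by
          rw [hQI]; congr 1; ring
  rw [← ofReal_norm, ENNReal.ofReal_le_ofReal_iff] at main
  · exact main
  · have : 0 ≤ ∫ z, ‖z‖ * gau d z :=
      integral_nonneg fun z => mul_nonneg (norm_nonneg _) (gau_pos d _).le
    have : 0 ≤ ∫ z, D z := integral_nonneg fun z => norm_nonneg _
    positivity

/-- same, centred at `v` -/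
lemma tv_bound' (d : ℕ) (v : EuclideanSpace ℝ (Fin d)) (h g : EuclideanSpace ℝ (Fin d) → ℝ)
    (hh : ContDiff ℝ 1 h)
    (hi : Integrable h) (hg : Continuous g) (hg1 : ∀ x, |g x| ≤ 1)
    (hD : Integrable fun ξ => ‖gradient h ξ + h ξ • (ξ - v)‖) :
    |(∫ ξ, g ξ * h ξ) - (∫ ξ, h ξ) * ∫ ξ, g ξ * gau d (ξ - v)|
      ≤ (π / 2 * ∫ z, ‖z‖ * gau d z) * ∫ ξ, ‖gradient h ξ + h ξ • (ξ - v)‖ := by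
  have hgr : ∀ ξ, gradient (fun ξ => h (ξ + v)) ξ = gradient h (ξ + v) := by
    intro ξ; simp only [gradient]; rw [fderiv_comp_add_right]
  have e : ∀ ξ, ‖gradient (fun ξ => h (ξ + v)) ξ + h (ξ + v) • ξ‖
      = (fun ξ => ‖gradient h ξ + h ξ • (ξ - v)‖) (ξ + v) := by
    intro ξ; simp [hgr]
  have := tv_bound d (fun ξ => h (ξ + v)) (fun ξ => g (ξ + v))
    (hh.comp (by fun_prop)) (hi.comp_add_right v) (by fun_prop) (fun x => hg1 _)
    (by simp_rw [e]; exact hD.comp_add_right v)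
  simp_rw [e] at this
  rw [integral_add_right_eq_self (fun ξ => ‖gradient h ξ + h ξ • (ξ - v)‖) v,
    integral_add_right_eq_self h v, integral_add_right_eq_self (fun ξ => g ξ * h ξ) v,
    ← integral_sub_right_eq_self (fun ξ => g (ξ + v) * gau d ξ) v] at this
  simpa using this

lemma jensen_aux {Ω : Type*} [MeasurableSpace Ω] {μ : Measure Ω} (w b q : Ω → ℝ)
    (hw : Integrable w μ) (hw1 : ∫ x, w x ∂μ = 1) (hw0 : ∀ x, 0 ≤ w x) (hb0 : ∀ x, 0 ≤ b x)
    (hq : Integrable q μ) (hq0 : ∀ x, 0 ≤ q x) (h : ∀ x, b x ^ 2 = w x * q x) :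
    Integrable b μ ∧ (∫ x, b x ∂μ) ^ 2 ≤ ∫ x, q x ∂μ := by
  have hbs : b = fun x => Real.sqrt (w x * q x) := by
    funext x; rw [← h x, Real.sqrt_sq (hb0 x)]
  have key : ∀ m x, 2 * m * b x ≤ m ^ 2 * w x + q x := by
    intro m x
    have h0 : 0 ≤ m ^ 2 * w x + q x := add_nonneg (mul_nonneg (sq_nonneg _) (hw0 x)) (hq0 x)
    refine le_of_sq_le_sq ?_ h0
    have := h x
    nlinarith [sq_nonneg (m ^ 2 * w x - q x)]
  have hbi : Integrable b μ := by
    refine (hw.add hq).mono' ?_ (Filter.Eventually.of_forall fun x => ?_)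
    · rw [hbs]
      exact Real.continuous_sqrt.comp_aestronglyMeasurable
        (hw.aestronglyMeasurable.mul hq.aestronglyMeasurable)
    · rw [Real.norm_of_nonneg (hb0 x)]
      have := key 1 x
      have := hb0 x
      simp only [Pi.add_apply]; linarith
  refine ⟨hbi, ?_⟩
  set m := ∫ x, b x ∂μ with hm
  have := integral_mono (hbi.const_mul (2 * m)) ((hw.const_mul (m ^ 2)).add hq) (key m)
  rw [integral_const_mul] at this
  simp only [Pi.add_apply] at this
  rw [integral_add (hw.const_mul (m ^ 2)) hq, integral_const_mul, hw1, ← hm] at this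
  nlinarith

lemma integral_wd {X : Type*} [MeasurableSpace X] {μ : Measure X} (f φ : X → ℝ)
    (hf : Integrable f μ) (hf0 : ∀ x, 0 ≤ f x) :
    ∫ x, φ x ∂(μ.withDensity fun x => ENNReal.ofReal (f x)) = ∫ x, φ x * f x ∂μ := by
  rw [integral_withDensity_eq_integral_toReal_smul₀ hf.aestronglyMeasurable.aemeasurable.ennreal_ofReal
    (Filter.Eventually.of_forall fun x => ENNReal.ofReal_lt_top)]
  refine integral_congr_ae (Filter.Eventually.of_forall fun x => ?_)
  simp only [ENNReal.toReal_ofReal (hf0 x), smul_eq_mul, mul_comm]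

lemma dBL_nonneg {X : Type*} [MeasurableSpace X] [PseudoMetricSpace X]
    (μ ν : Measure X) : 0 ≤ dBL μ ν := by
  refine Real.sSup_nonneg ?_
  rintro r ⟨φ, -, rfl⟩
  exact abs_nonneg _

lemma le_dBL {X : Type*} [MeasurableSpace X] [PseudoMetricSpace X]
    (μ ν : Measure X) [IsFiniteMeasure μ] [IsFiniteMeasure ν] (φ : X → ℝ) (C L : NNReal)
    (hC : ∀ x, |φ x| ≤ C) (hL : LipschitzWith L φ) (h : (C : ℝ) + L ≤ 1) :
    |(∫ x, φ x ∂μ) - ∫ x, φ x ∂ν| ≤ dBL μ ν := by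
  refine le_csSup ⟨μ.real Set.univ + ν.real Set.univ, ?_⟩ ⟨φ, ⟨C, L, hC, hL, h⟩, rfl⟩
  rintro r ⟨ψ, ⟨C', L', hC', -, h'⟩, rfl⟩
  have hC1 : (C' : ℝ) ≤ 1 := by have := L'.coe_nonneg; linarith
  have hb : ∀ (m : Measure X) [IsFiniteMeasure m], |∫ x, ψ x ∂m| ≤ m.real Set.univ := by
    intro m _
    have := norm_integral_le_of_norm_le_const (μ := m) (f := ψ) (C := 1)
      (Filter.Eventually.of_forall fun x => (hC' x).trans hC1)
    simpa using this
  exact (abs_sub _ _).trans (add_le_add (hb μ) (hb ν))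

lemma Phi_eq (d : ℕ) (φ : EuclideanSpace ℝ (Fin d) × EuclideanSpace ℝ (Fin d) → ℝ)
    (u : EuclideanSpace ℝ (Fin d) → EuclideanSpace ℝ (Fin d)) (x : EuclideanSpace ℝ (Fin d)) :
    ∫ ξ, φ (x, ξ) * gau d (ξ - u x) = ∫ z, φ (x, z + u x) * gau d z := by
  rw [← integral_add_right_eq_self (fun ξ => φ (x, ξ) * gau d (ξ - u x)) (u x)]
  simp

lemma Phi_int (d : ℕ) (g : EuclideanSpace ℝ (Fin d) → ℝ) (hg : Continuous g) (C : ℝ)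
    (hC : ∀ x, |g x| ≤ C) : Integrable fun z => g z * gau d z :=
  (gau_int d).bdd_mul (c := C) hg.aestronglyMeasurable (Filter.Eventually.of_forall hC)

lemma Phi_bound (d : ℕ) (g : EuclideanSpace ℝ (Fin d) → ℝ) (C : ℝ)
    (hC : ∀ x, |g x| ≤ C) : |∫ z, g z * gau d z| ≤ C := by
  have := norm_integral_le_of_norm_le (f := fun z => g z * gau d z)
    ((gau_int d).const_mul C) (Filter.Eventually.of_forall fun z => by
      rw [norm_mul, Real.norm_of_nonneg (gau_pos d z).le]
      exact mul_le_mul_of_nonneg_right (hC z) (gau_pos d z).le)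
  rwa [integral_const_mul, gau_integral, mul_one] at this

lemma Phi_lip (d : ℕ) (φ : EuclideanSpace ℝ (Fin d) × EuclideanSpace ℝ (Fin d) → ℝ)
    (u : EuclideanSpace ℝ (Fin d) → EuclideanSpace ℝ (Fin d)) (C K L : NNReal)
    (hC : ∀ p, |φ p| ≤ C) (hφ : LipschitzWith K φ) (hu : LipschitzWith L u) :
    LipschitzWith (K * (1 + L)) fun x => ∫ z, φ (x, z + u x) * gau d z := by
  refine LipschitzWith.of_dist_le_mul fun x y => ?_
  have hφc := hφ.continuous
  rw [Real.dist_eq, ← integral_sub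
    (Phi_int d (fun z => φ (x, z + u x)) (by fun_prop) C (fun z => hC _))
    (Phi_int d (fun z => φ (y, z + u y)) (by fun_prop) C (fun z => hC _))]
  simp_rw [← sub_mul]
  refine Phi_bound d (fun z => φ (x, z + u x) - φ (y, z + u y)) _ fun z => ?_
  have h1 := hφ.dist_le_mul (x, z + u x) (y, z + u y)
  rw [Real.dist_eq] at h1
  refine h1.trans ?_
  push_cast
  rw [mul_assoc]
  refine mul_le_mul_of_nonneg_left ?_ K.coe_nonneg
  have h2 := hu.dist_le_mul x y
  rw [Prod.dist_eq]
  have h3 : dist x y ≥ 0 := dist_nonneg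
  have h4 := L.coe_nonneg
  refine max_le ?_ ?_
  · simp only; nlinarith
  · simp only [dist_add_left]; nlinarith

set_option maxHeartbeats 1000000 in
/-- Quantitative bound of the bounded Lipschitz distance between a kinetic density and a
local Maxwellian in terms of the Fisher information dissipation, the relative velocity
term and the BL distance of the macroscopic densities. -/
theorem dBL_kinetic_maxwellian_bound
    (d : ℕ) (hd : 1 ≤ d) (L : NNReal) :
    ∃ C > 0,
      ∀ (f : EuclideanSpace ℝ (Fin d) × EuclideanSpace ℝ (Fin d) → ℝ)
        (ρ : EuclideanSpace ℝ (Fin d) → ℝ)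
        (u : EuclideanSpace ℝ (Fin d) → EuclideanSpace ℝ (Fin d)),
        (∀ p, 0 < f p) →
        (∀ x, ContDiff ℝ 1 fun ξ => f (x, ξ)) →
        Integrable f →
        (∫ p, f p) = 1 →
        Integrable (fun p : EuclideanSpace ℝ (Fin d) × EuclideanSpace ℝ (Fin d) =>
          ‖p.2‖ ^ 2 * f p) →
        Integrable (fun p : EuclideanSpace ℝ (Fin d) × EuclideanSpace ℝ (Fin d) =>
          (f p)⁻¹ * ‖gradient (fun ξ => f (p.1, ξ)) p.2
            + f p • (p.2 - macroVelocity d f p.1)‖ ^ 2) →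
        Measurable ρ → (∀ x, 0 ≤ ρ x) → Integrable ρ → (∫ x, ρ x) = 1 →
        LipschitzWith L u →
        Integrable (fun x => macroDensity d f x * ‖macroVelocity d f x - u x‖ ^ 2) →
        dBL (volume.withDensity fun p => ENNReal.ofReal (f p))
            (volume.withDensity fun p : EuclideanSpace ℝ (Fin d) × EuclideanSpace ℝ (Fin d) =>
              ENNReal.ofReal (maxwellian d (ρ p.1) (u p.1) p.2)) ^ 2
          ≤ C * ((∫ p : EuclideanSpace ℝ (Fin d) × EuclideanSpace ℝ (Fin d),
                (f p)⁻¹ * ‖gradient (fun ξ => f (p.1, ξ)) p.2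
                  + f p • (p.2 - macroVelocity d f p.1)‖ ^ 2)
              + (∫ x, macroDensity d f x * ‖macroVelocity d f x - u x‖ ^ 2)
              + dBL (volume.withDensity fun x => ENNReal.ofReal (macroDensity d f x))
                  (volume.withDensity fun x => ENNReal.ofReal (ρ x)) ^ 2) := by
  set K : ℝ := π / 2 * ∫ z, ‖z‖ * gau d z with hK
  have hK0 : 0 ≤ K := by
    have : 0 ≤ ∫ z, ‖z‖ * gau d z :=
      integral_nonneg fun z => mul_nonneg (norm_nonneg _) (gau_pos d _).le
    positivity
  have hL0 := L.coe_nonneg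
  refine ⟨3 * (K ^ 2 + (1 + L) ^ 2), by positivity, ?_⟩
  intro f ρ u hf0 hf1 hfi hfI _ hAi hρm hρ0 hρi hρI hu hJi
  set A : EuclideanSpace ℝ (Fin d) × EuclideanSpace ℝ (Fin d) → ℝ := fun p =>
    ‖gradient (fun ξ => f (p.1, ξ)) p.2 + f p • (p.2 - macroVelocity d f p.1)‖ with hA
  set k : EuclideanSpace ℝ (Fin d) → ℝ := fun x => ‖macroVelocity d f x - u x‖ with hk
  set r := macroDensity d f with hr
  have hr0 : ∀ x, 0 ≤ r x := fun x => integral_nonneg fun ξ => (hf0 _).le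
  have hri : Integrable r := hfi.integral_prod_left
  have hrI : ∫ x, r x = 1 := by rw [← hfI]; exact (integral_prod f hfi).symm
  obtain ⟨hAint, hAle⟩ := jensen_aux f A (fun p => (f p)⁻¹ * A p ^ 2) hfi hfI (fun p => (hf0 p).le)
    (fun p => norm_nonneg _) hAi
    (fun p => mul_nonneg (inv_nonneg.2 (hf0 p).le) (sq_nonneg _))
    (fun p => by have := (hf0 p).ne'; field_simp)
  obtain ⟨hBint, hBle⟩ := jensen_aux r (fun x => r x * k x) (fun x => r x * k x ^ 2) hri hrI hr0
    (fun x => mul_nonneg (hr0 x) (norm_nonneg _)) hJi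
    (fun x => mul_nonneg (hr0 x) (sq_nonneg _)) (fun x => by ring)
  set I := ∫ p, (f p)⁻¹ * A p ^ 2 with hI
  set J := ∫ x, r x * k x ^ 2 with hJ
  set X1 := ∫ p, A p with hX1
  set X2 := ∫ x, r x * k x with hX2
  have hX10 : 0 ≤ X1 := integral_nonneg fun p => norm_nonneg _
  have hX20 : 0 ≤ X2 := integral_nonneg fun x => mul_nonneg (hr0 x) (norm_nonneg _)
  set δ := dBL (volume.withDensity fun x => ENNReal.ofReal (r x))
                  (volume.withDensity fun x => ENNReal.ofReal (ρ x)) with hδ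
  have hδ0 : 0 ≤ δ := dBL_nonneg _ _
  have : IsFiniteMeasure ((volume : Measure (EuclideanSpace ℝ (Fin d))).withDensity
    fun x => ENNReal.ofReal (r x)) := isFiniteMeasure_withDensity_ofReal hri.2
  have : IsFiniteMeasure ((volume : Measure (EuclideanSpace ℝ (Fin d))).withDensity
    fun x => ENNReal.ofReal (ρ x)) := isFiniteMeasure_withDensity_ofReal hρi.2
  -- the Maxwellian
  have huc := hu.continuous
  have hshear : MeasurePreserving
      (fun p : EuclideanSpace ℝ (Fin d) × EuclideanSpace ℝ (Fin d) => (p.1, p.2 - u p.1)) := by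
    refine MeasurePreserving.skew_product (g := fun x y => y - u x) (MeasurePreserving.id volume)
      (by unfold Function.uncurry; fun_prop) (Filter.Eventually.of_forall fun x => ?_)
    exact (measurePreserving_sub_right volume (u x)).map_eq
  have hMi : Integrable (fun p : EuclideanSpace ℝ (Fin d) × EuclideanSpace ℝ (Fin d) =>
      ρ p.1 * gau d (p.2 - u p.1)) :=
    hshear.integrable_comp_of_integrable (hρi.mul_prod (gau_int d))
  simp_rw [maxwellian_eq]
  have bound : dBL (volume.withDensity fun p => ENNReal.ofReal (f p))
            (volume.withDensity fun p : EuclideanSpace ℝ (Fin d) × EuclideanSpace ℝ (Fin d) =>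
              ENNReal.ofReal (ρ p.1 * gau d (p.2 - u p.1)))
      ≤ K * (X1 + X2) + (1 + L) * δ := by
    refine Real.sSup_le ?_ (by positivity)
    rintro _ ⟨φ, ⟨C, M, hC, hM, hCM⟩, rfl⟩
    have hφc := hM.continuous
    have hC1 : (C : ℝ) ≤ 1 := by have := M.coe_nonneg; linarith
    have hφ1 : ∀ p, |φ p| ≤ 1 := fun p => (hC p).trans hC1
    rw [integral_wd f φ hfi (fun p => (hf0 p).le),
      integral_wd _ φ hMi (fun p => mul_nonneg (hρ0 _) (gau_pos d _).le)]
    have i1 : Integrable fun p => φ p * f p :=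
      hfi.bdd_mul (c := 1) hφc.aestronglyMeasurable (Filter.Eventually.of_forall hφ1)
    have i2 : Integrable fun p : EuclideanSpace ℝ (Fin d) × EuclideanSpace ℝ (Fin d) =>
        φ p * (ρ p.1 * gau d (p.2 - u p.1)) :=
      hMi.bdd_mul (c := 1) hφc.aestronglyMeasurable (Filter.Eventually.of_forall hφ1)
    set Φ : EuclideanSpace ℝ (Fin d) → ℝ := fun x => ∫ z, φ (x, z + u x) * gau d z with hΦ
    have hΦL : LipschitzWith (M * (1 + L)) Φ := Phi_lip d φ u C M L hC hM hu
    have hΦb : ∀ x, |Φ x| ≤ C := fun x => Phi_bound d _ _ (fun z => hC _)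
    have hΦr : Integrable fun x => Φ x * r x :=
      hri.bdd_mul (c := C) hΦL.continuous.aestronglyMeasurable (Filter.Eventually.of_forall hΦb)
    have e1 : ∫ p, φ p * f p = ∫ x, ∫ ξ, φ (x, ξ) * f (x, ξ) := integral_prod _ i1
    have e2 : ∫ p : EuclideanSpace ℝ (Fin d) × EuclideanSpace ℝ (Fin d),
        φ p * (ρ p.1 * gau d (p.2 - u p.1)) = ∫ x, Φ x * ρ x := by
      refine (integral_prod _ i2).trans ?_
      refine integral_congr_ae (Filter.Eventually.of_forall fun x => ?_)
      simp only [hΦ]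
      rw [← Phi_eq d φ u x, ← integral_mul_const]
      refine integral_congr_ae (Filter.Eventually.of_forall fun ξ => ?_)
      simp only; ring
    have i3 : Integrable fun x => ∫ ξ, φ (x, ξ) * f (x, ξ) := i1.integral_prod_left
    -- macroscopic part
    have part2 : |(∫ x, Φ x * r x) - ∫ x, Φ x * ρ x| ≤ (1 + L) * δ := by
      have hlip : LipschitzWith M (fun x => (1 + (L : ℝ))⁻¹ * Φ x) := by
        refine LipschitzWith.of_dist_le_mul fun x y => ?_
        have := hΦL.dist_le_mul x y
        rw [Real.dist_eq] at this ⊢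
        rw [← mul_sub, abs_mul, abs_of_nonneg (by positivity), inv_mul_le_iff₀ (by positivity)]
        refine this.trans (le_of_eq ?_)
        push_cast; ring
      have := le_dBL (volume.withDensity fun x => ENNReal.ofReal (r x))
        (volume.withDensity fun x => ENNReal.ofReal (ρ x)) (fun x => (1 + (L : ℝ))⁻¹ * Φ x) C M
        (fun x => by
          rw [abs_mul, abs_of_nonneg (by positivity), inv_mul_le_iff₀ (by positivity)]
          have := hΦb x
          nlinarith [C.coe_nonneg]) hlip hCM
      rw [integral_const_mul, integral_const_mul, ← mul_sub, abs_mul,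
        abs_of_nonneg (by positivity), inv_mul_le_iff₀ (by positivity),
        integral_wd r Φ hri hr0, integral_wd ρ Φ hρi hρ0] at this
      exact this
    -- kinetic part
    have part1 : |∫ x, ((∫ ξ, φ (x, ξ) * f (x, ξ)) - Φ x * r x)| ≤ K * (X1 + X2) := by
      have hAx : Integrable fun x => ∫ ξ, A (x, ξ) := hAint.integral_prod_left
      have hX1' : X1 = ∫ x, ∫ ξ, A (x, ξ) := integral_prod _ hAint
      have hb : Integrable fun x => K * ((∫ ξ, A (x, ξ)) + r x * k x) :=
        (hAx.add hBint).const_mul K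
      have hbI : ∫ x, K * ((∫ ξ, A (x, ξ)) + r x * k x) = K * (X1 + X2) := by
        rw [integral_const_mul, integral_add hAx hBint, hX1']
      rw [← hbI, ← Real.norm_eq_abs]
      refine norm_integral_le_of_norm_le hb ?_
      filter_upwards [hfi.prod_right_ae, hAint.prod_right_ae] with x hx1 hx2
      have hpt : ∀ ξ, ‖gradient (fun ξ => f (x, ξ)) ξ + f (x, ξ) • (ξ - u x)‖
          ≤ A (x, ξ) + f (x, ξ) * k x := by
        intro ξ
        have : gradient (fun ξ => f (x, ξ)) ξ + f (x, ξ) • (ξ - u x)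
            = (gradient (fun ξ => f (x, ξ)) ξ + f (x, ξ) • (ξ - macroVelocity d f x))
              + f (x, ξ) • (macroVelocity d f x - u x) := by module
        rw [this]
        refine (norm_add_le _ _).trans (add_le_add le_rfl ?_)
        rw [norm_smul, Real.norm_of_nonneg (hf0 _).le]
      have hgc : Continuous (gradient fun ξ => f (x, ξ)) := by
        unfold gradient
        exact (InnerProductSpace.toDual ℝ (EuclideanSpace ℝ (Fin d))).symm.continuous.comp
          ((hf1 x).continuous_fderiv (by norm_num))
      have hfc : Continuous fun ξ => f (x, ξ) := (hf1 x).continuous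
      have hbd : Integrable fun ξ => A (x, ξ) + f (x, ξ) * k x := hx2.add (hx1.mul_const _)
      have hDi : Integrable fun ξ => ‖gradient (fun ξ => f (x, ξ)) ξ + f (x, ξ) • (ξ - u x)‖ := by
        refine hbd.mono' ?_ (Filter.Eventually.of_forall fun ξ => ?_)
        · exact Continuous.aestronglyMeasurable (hgc.add (hfc.smul (continuous_id.sub continuous_const))).norm
        · rw [norm_norm]; exact hpt ξ
      have htv := tv_bound' d (u x) (fun ξ => f (x, ξ)) (fun ξ => φ (x, ξ)) (hf1 x) hx1
        (by fun_prop) (fun ξ => hφ1 _) hDi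
      have hle := integral_mono hDi hbd hpt
      rw [integral_add hx2 (hx1.mul_const _), integral_mul_const] at hle
      rw [Phi_eq d φ u x] at htv
      have hre : (∫ ξ, f (x, ξ)) * (∫ z, φ (x, z + u x) * gau d z) = Φ x * r x := mul_comm _ _
      rw [hre] at htv
      exact htv.trans (mul_le_mul_of_nonneg_left hle hK0)
    rw [e1, e2]
    have hsplit : (∫ x, ∫ ξ, φ (x, ξ) * f (x, ξ)) - ∫ x, Φ x * ρ x
        = (∫ x, ((∫ ξ, φ (x, ξ) * f (x, ξ)) - Φ x * r x))
          + ((∫ x, Φ x * r x) - ∫ x, Φ x * ρ x) := by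
      rw [integral_sub i3 hΦr]; ring
    rw [hsplit]
    exact (abs_add_le _ _).trans (add_le_add part1 part2)
  have hn := dBL_nonneg (volume.withDensity fun p => ENNReal.ofReal (f p))
            (volume.withDensity fun p : EuclideanSpace ℝ (Fin d) × EuclideanSpace ℝ (Fin d) =>
              ENNReal.ofReal (ρ p.1 * gau d (p.2 - u p.1)))
  refine (pow_le_pow_left₀ hn bound 2).trans ?_
  have hI0 : 0 ≤ I := (sq_nonneg _).trans hAle
  have hJ0 : 0 ≤ J := (sq_nonneg _).trans hBle
  have s1 : (K * (X1 + X2) + (1 + L) * δ) ^ 2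
      ≤ 3 * ((K * X1) ^ 2 + (K * X2) ^ 2 + ((1 + L) * δ) ^ 2) := by
    nlinarith [sq_nonneg (K * X1 - K * X2), sq_nonneg (K * X1 - (1 + L) * δ),
      sq_nonneg (K * X2 - (1 + L) * δ)]
  have s2 : K ^ 2 * X1 ^ 2 ≤ K ^ 2 * I := mul_le_mul_of_nonneg_left hAle (sq_nonneg _)
  have s3 : K ^ 2 * X2 ^ 2 ≤ K ^ 2 * J := mul_le_mul_of_nonneg_left hBle (sq_nonneg _)
  have s4 : 0 ≤ (1 + (L : ℝ)) ^ 2 * (I + J) := by positivity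
  have s5 : 0 ≤ K ^ 2 * δ ^ 2 := by positivity
  nlinarith
end

section
/- Let d ≥ 1, T > 0 and A, B, τ > 0. Let ψ ∈ C^∞([0,T] × ℝ^d × ℝ^d; ℝ) be such that every partial derivative of ψ of order at least 1 is bounded on [0,T] × ℝ^{2d} by a polynomial in (|x|,|ξ|), and set f := e^{−ψ}; assume sup_{t∈[0,T]} ∫∫ (1+|x|+|ξ|)^N f(t,x,ξ) dx dξ < ∞ for every N ∈ ℕ, and let ρ_f, u_f be the macroscopic density and velocity of f(t,·,·). Let F ∈ C^1([0,T] × ℝ^d × ℝ^d; ℝ^d) with |F| and |∇_ξ·F| bounded by a polynomial in (|x|,|ξ|) uniformly in t, and suppose f solves pointwise the kinetic equation A ∂_t f + B ξ·∇_x f + ∇_ξ·(F f) = (1/τ) ∇_ξ·(∇_ξ f + ξ f) on (0,T) × ℝ^{2d}. Let ρ ∈ C^1((0,T) × ℝ^d; (0,∞)) and u, R ∈ C^1((0,T) × ℝ^d; ℝ^d) with |log ρ|, |∇ log ρ|, |u|, |∇u|, |∂_t u| and |R| bounded by polynomials in |x| uniformly in t, satisfying pointwise the macroscopic system A ∂_t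 ρ + B ∇·(ρ u) = 0 and A ∂_t(ρ u) + B ∇·(ρ u⊗u) + B ∇ρ = ρ R. Then t ↦ ∫∫ f log(f/M_{ρ,u}) dx dξ is differentiable on (0,T), and for every t ∈ (0,T): (d/dt) ∫∫ f log(f/M_{ρ,u}) dx dξ + (1/(Aτ)) ∫∫ (1/f)|∇_ξ f + (ξ − u_f) f|² dx dξ = −(B/A) ∫∫ f ((u−ξ)⊗(u−ξ) − I_d) : ∇u dx dξ − (1/(Aτ)) ∫ ρ_f u_f·(u_f − u) dx − (1/A) ∫∫ (∇_ξ·F) f dx dξ − (1/A) ∫∫ f (u−ξ)·(F − R) dx dξ. -/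
open MeasureTheory Real
open scoped RealInnerProductSpace

/-- Divergence of a vector field on Euclidean space. -/
noncomputable def ediv {d : ℕ}
    (G : EuclideanSpace ℝ (Fin d) → EuclideanSpace ℝ (Fin d))
    (ξ : EuclideanSpace ℝ (Fin d)) : ℝ :=
  ∑ i, fderiv ℝ G ξ (EuclideanSpace.single i 1) i


theorem aux_integral_div_zero {V : Type*} [NormedAddCommGroup V] [NormedSpace ℝ V]
    [FiniteDimensional ℝ V] [MeasurableSpace V] [BorelSpace V] (μ : Measure V)
    [μ.IsAddHaarMeasure] {ι : Type*} (s : Finset ι) (v : ι → V) (h : ι → V → ℝ)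
    (hc : ∀ i ∈ s, ContDiff ℝ 1 (h i)) (hi : ∀ i ∈ s, Integrable (h i) μ)
    (hd : Integrable (fun p => ∑ i ∈ s, fderiv ℝ (h i) p (v i)) μ) :
    ∫ p, ∑ i ∈ s, fderiv ℝ (h i) p (v i) ∂μ = 0 := by
  let χ : ContDiffBump (0 : V) := ⟨1, 2, zero_lt_one, one_lt_two⟩
  have hχc : ContDiff ℝ 1 χ := χ.contDiff
  have hχs : HasCompactSupport χ := χ.hasCompactSupport
  have hχds : HasCompactSupport (fderiv ℝ χ) := hχs.fderiv (𝕜 := ℝ)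
  have hχdc : Continuous (fderiv ℝ χ) := hχc.continuous_fderiv (by norm_num)
  obtain ⟨C, hC⟩ := hχdc.bounded_above_of_compact_support hχds
  let ε : ℕ → ℝ := fun n => 1 / ((n : ℝ) + 1)
  have hεpos : ∀ n, 0 < ε n := fun n => by positivity
  have hεlim : Filter.Tendsto ε Filter.atTop (nhds 0) := tendsto_one_div_add_atTop_nhds_zero_nat
  let X : ℕ → V → ℝ := fun n p => χ (ε n • p)
  have hXc : ∀ n, ContDiff ℝ 1 (X n) := fun n => hχc.comp (contDiff_const_smul _)
  have hXs : ∀ n, HasCompactSupport (X n) := fun n => by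
    exact hχs.comp_homeomorph (Homeomorph.smulOfNeZero (ε n) (hεpos n).ne')
  have hXd : ∀ n p w, fderiv ℝ (X n) p w = ε n * fderiv ℝ χ (ε n • p) w := by
    intro n p w
    have h1 : HasFDerivAt (X n) ((fderiv ℝ χ (ε n • p)).comp (ε n • ContinuousLinearMap.id ℝ V)) p := by
      have a1 : HasFDerivAt χ (fderiv ℝ χ (ε n • p)) (ε n • p) :=
        (hχc.differentiable (by norm_num) _).hasFDerivAt
      have a2 : HasFDerivAt (fun p : V => ε n • p) (ε n • ContinuousLinearMap.id ℝ V) p :=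
        (hasFDerivAt_id p).const_smul (ε n)
      exact HasFDerivAt.comp (f := fun p : V => ε n • p) (g := fun q : V => χ q) p a1 a2
    rw [h1.fderiv]; simp
  -- integrate by parts
  have key : ∀ n, ∫ p, X n p * ∑ i ∈ s, fderiv ℝ (h i) p (v i) ∂μ
      = - ∑ i ∈ s, ∫ p, fderiv ℝ (X n) p (v i) * h i p ∂μ := by
    intro n
    have hI : ∀ i ∈ s, Integrable (fun p => X n p * fderiv ℝ (h i) p (v i)) μ := fun i his =>
      Continuous.integrable_of_hasCompactSupport
        ((hXc n).continuous.mul (((hc i his).continuous_fderiv (by norm_num)).clm_apply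
          continuous_const)) (hXs n).mul_right
    simp_rw [Finset.mul_sum]
    rw [integral_finsetSum _ hI, ← Finset.sum_neg_distrib]
    refine Finset.sum_congr rfl fun i his => ?_
    apply integral_mul_fderiv_eq_neg_fderiv_mul_of_integrable _ (hI i his)
    · exact Continuous.integrable_of_hasCompactSupport
        ((hXc n).continuous.mul (hc i his).continuous) (hXs n).mul_right
    · intro x _; exact (hXc n).differentiable (by norm_num) x
    · intro x _; exact (hc i his).differentiable (by norm_num) x
    · apply Continuous.integrable_of_hasCompactSupport
      · exact (((hXc n).continuous_fderiv (by norm_num)).clm_apply continuous_const).mul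
          (hc i his).continuous
      · exact ((hXs n).fderiv_apply (𝕜 := ℝ) (v i)).mul_right
  have lim1 : Filter.Tendsto (fun n => ∫ p, X n p * ∑ i ∈ s, fderiv ℝ (h i) p (v i) ∂μ)
      Filter.atTop (nhds (∫ p, ∑ i ∈ s, fderiv ℝ (h i) p (v i) ∂μ)) := by
    apply tendsto_integral_of_dominated_convergence (fun p => ‖∑ i ∈ s, fderiv ℝ (h i) p (v i)‖)
    · intro n
      exact (hXc n).continuous.aestronglyMeasurable.mul hd.aestronglyMeasurable
    · exact hd.norm
    · intro n
      refine Filter.Eventually.of_forall fun p => ?_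
      rw [norm_mul]
      have : ‖X n p‖ ≤ 1 := by
        rw [Real.norm_eq_abs, abs_of_nonneg χ.nonneg]; exact χ.le_one
      exact mul_le_of_le_one_left (norm_nonneg _) this
    · refine Filter.Eventually.of_forall fun p => ?_
      have h0 : Filter.Tendsto (fun n => ε n • p) Filter.atTop (nhds (0 : V)) := by
        simpa using hεlim.smul_const p
      have h1 : ∀ᶠ n in Filter.atTop, X n p = 1 := h0.eventually χ.eventuallyEq_one
      apply tendsto_const_nhds.congr'
      filter_upwards [h1] with n hn
      rw [hn, one_mul]
  have lim2 : Filter.Tendsto (fun n => - ∑ i ∈ s, ∫ p, fderiv ℝ (X n) p (v i) * h i p ∂μ)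
      Filter.atTop (nhds (- ∑ i ∈ s, (0 : ℝ))) := by
    refine (tendsto_finsetSum _ fun i his => ?_).neg
    apply squeeze_zero_norm (a := fun n => ε n * (∫ p, C * ‖v i‖ * ‖h i p‖ ∂μ))
    · intro n
      rw [← integral_const_mul]
      apply norm_integral_le_of_norm_le (((hi i his).norm.const_mul _).const_mul _)
      refine Filter.Eventually.of_forall fun p => ?_
      rw [hXd, norm_mul, norm_mul, Real.norm_eq_abs (ε n), abs_of_pos (hεpos n), mul_assoc]
      refine mul_le_mul_of_nonneg_left ?_ (hεpos n).le
      refine mul_le_mul_of_nonneg_right ?_ (norm_nonneg _)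
      exact (ContinuousLinearMap.le_opNorm _ _).trans
        (mul_le_mul_of_nonneg_right (hC _) (norm_nonneg _))
    · simpa using hεlim.mul_const (∫ p, C * ‖v i‖ * ‖h i p‖ ∂μ)
  simp_rw [key] at lim1
  simpa using tendsto_nhds_unique lim1 lim2


/-- Euclidean space. -/
abbrev AuxE (d : ℕ) := EuclideanSpace ℝ (Fin d)

/-- Time-phase space. -/
abbrev AuxX (d : ℕ) := ℝ × AuxE d × AuxE d

/-- Polynomial weight. -/
noncomputable def auxW {d : ℕ} (p : AuxE d × AuxE d) : ℝ := 1 + ‖p.1‖ + ‖p.2‖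

theorem auxW_one_le {d : ℕ} (p : AuxE d × AuxE d) : 1 ≤ auxW p := by
  unfold auxW; have := norm_nonneg p.1; have := norm_nonneg p.2; linarith

theorem auxW_cont {d : ℕ} : Continuous (auxW (d := d)) := by
  unfold auxW; fun_prop

/-- Polynomially bounded, uniformly in time. -/
def AuxPB {d : ℕ} (T : ℝ) (h : AuxX d → ℝ) : Prop :=
  ∃ c : ℝ, ∃ k : ℕ, 0 ≤ c ∧ ∀ t ∈ Set.Ioo 0 T, ∀ p : AuxE d × AuxE d, |h (t, p)| ≤ c * auxW p ^ k

theorem AuxPB.mk' {d : ℕ} {T : ℝ} {h : AuxX d → ℝ} (c : ℝ) (k : ℕ)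
    (hh : ∀ t ∈ Set.Ioo 0 T, ∀ p : AuxE d × AuxE d, |h (t, p)| ≤ c * auxW p ^ k) : AuxPB T h := by
  refine ⟨|c|, k, abs_nonneg _, fun t ht p => (hh t ht p).trans ?_⟩
  have := auxW_one_le p
  exact mul_le_mul_of_nonneg_right (le_abs_self _) (by positivity)

theorem AuxPB.mono {d : ℕ} {T : ℝ} {h g : AuxX d → ℝ} (hg : AuxPB T g)
    (hh : ∀ t ∈ Set.Ioo 0 T, ∀ p : AuxE d × AuxE d, |h (t, p)| ≤ |g (t, p)|) : AuxPB T h := by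
  obtain ⟨c, k, hc, H⟩ := hg
  exact ⟨c, k, hc, fun t ht p => (hh t ht p).trans (H t ht p)⟩

theorem AuxPB.congr {d : ℕ} {T : ℝ} {h g : AuxX d → ℝ} (hg : AuxPB T g)
    (hh : ∀ t ∈ Set.Ioo 0 T, ∀ p : AuxE d × AuxE d, h (t, p) = g (t, p)) : AuxPB T h :=
  hg.mono fun t ht p => by rw [hh t ht p]

theorem AuxPB.const {d : ℕ} (T : ℝ) (a : ℝ) : AuxPB T (fun _ : AuxX d => a) :=
  ⟨|a|, 0, abs_nonneg _, fun t _ p => by simp⟩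

theorem AuxPB.add {d : ℕ} {T : ℝ} {h g : AuxX d → ℝ} (hh : AuxPB T h) (hg : AuxPB T g) :
    AuxPB T (fun p => h p + g p) := by
  obtain ⟨c, k, hc, H⟩ := hh
  obtain ⟨c', k', hc', H'⟩ := hg
  refine ⟨c + c', max k k', by positivity, fun t ht p => ?_⟩
  have h1 := auxW_one_le p
  have e1 : auxW p ^ k ≤ auxW p ^ (max k k') := pow_le_pow_right₀ h1 (le_max_left _ _)
  have e2 : auxW p ^ k' ≤ auxW p ^ (max k k') := pow_le_pow_right₀ h1 (le_max_right _ _)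
  calc |h (t, p) + g (t, p)| ≤ |h (t, p)| + |g (t, p)| := abs_add_le _ _
    _ ≤ c * auxW p ^ k + c' * auxW p ^ k' := add_le_add (H t ht p) (H' t ht p)
    _ ≤ c * auxW p ^ (max k k') + c' * auxW p ^ (max k k') := by gcongr
    _ = _ := by ring

theorem AuxPB.mul {d : ℕ} {T : ℝ} {h g : AuxX d → ℝ} (hh : AuxPB T h) (hg : AuxPB T g) :
    AuxPB T (fun p => h p * g p) := by
  obtain ⟨c, k, hc, H⟩ := hh
  obtain ⟨c', k', hc', H'⟩ := hg
  refine ⟨c * c', k + k', by positivity, fun t ht p => ?_⟩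
  have h1 := auxW_one_le p
  rw [abs_mul]
  calc |h (t, p)| * |g (t, p)| ≤ (c * auxW p ^ k) * (c' * auxW p ^ k') :=
        mul_le_mul (H t ht p) (H' t ht p) (abs_nonneg _) (by positivity)
    _ = _ := by ring

theorem AuxPB.neg {d : ℕ} {T : ℝ} {h : AuxX d → ℝ} (hh : AuxPB T h) :
    AuxPB T (fun p => - h p) := hh.mono fun t ht p => by rw [abs_neg]

theorem AuxPB.sub {d : ℕ} {T : ℝ} {h g : AuxX d → ℝ} (hh : AuxPB T h) (hg : AuxPB T g) :
    AuxPB T (fun p => h p - g p) := by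
  simpa [sub_eq_add_neg] using hh.add hg.neg

theorem AuxPB.sum {d : ℕ} {T : ℝ} {ι : Type*} (s : Finset ι) {h : ι → AuxX d → ℝ}
    (hh : ∀ i ∈ s, AuxPB T (h i)) : AuxPB T (fun p => ∑ i ∈ s, h i p) := by
  classical
  induction s using Finset.induction_on with
  | empty => simpa using AuxPB.const T 0
  | insert a s ha ih =>
    simp_rw [Finset.sum_insert ha]
    exact (hh a (Finset.mem_insert_self _ _)).add
      (ih fun i hi => hh i (Finset.mem_insert_of_mem hi))

theorem AuxPB.weight {d : ℕ} (T : ℝ) : AuxPB T (fun p : AuxX d => auxW p.2) :=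
  ⟨1, 1, zero_le_one, fun t _ p => by
    have := auxW_one_le p
    simp only [pow_one, one_mul]; rw [abs_of_nonneg (by linarith)]⟩

theorem AuxPB.coord {d : ℕ} (T : ℝ) (i : Fin d) : AuxPB T (fun p : AuxX d => p.2.2 i) :=
  (AuxPB.weight T).mono fun t _ p => by
    have := auxW_one_le p
    rw [abs_of_nonneg (a := auxW _) (by simp only; linarith)]
    have h1 := PiLp.norm_apply_le p.2 i
    rw [Real.norm_eq_abs] at h1
    have := norm_nonneg p.1
    simp only [auxW]; linarith

/-- integrability of polynomially bounded times `f`. -/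
theorem aux_integrable {d : ℕ} {T : ℝ} {f : AuxX d → ℝ} {h : AuxX d → ℝ}
    (hmom : ∀ N : ℕ, ∀ t ∈ Set.Ioo (0 : ℝ) T,
      Integrable (fun p : AuxE d × AuxE d => auxW p ^ N * f (t, p)))
    (hh : AuxPB T h) (t : ℝ) (ht : t ∈ Set.Ioo 0 T)
    (hm : AEStronglyMeasurable (fun p => h (t, p)) volume)
    (hfm : AEStronglyMeasurable (fun p => f (t, p)) volume) :
    Integrable (fun p => f (t, p) * h (t, p)) := by
  obtain ⟨c, k, hc, H⟩ := hh
  refine ((hmom k t ht).const_mul c).mono (hfm.mul hm) ?_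
  refine Filter.Eventually.of_forall fun p => ?_
  have := auxW_one_le p
  rw [norm_mul, norm_mul, norm_mul, Real.norm_eq_abs c, abs_of_nonneg hc,
    Real.norm_eq_abs (auxW p ^ k), abs_of_nonneg (a := auxW p ^ k) (by positivity), ← mul_assoc,
    mul_comm ‖f _‖]
  exact mul_le_mul_of_nonneg_right (H t ht p) (norm_nonneg _)

theorem aux_dom {d : ℕ} {T : ℝ} (hT : 0 < T) {f ft : AuxX d → ℝ} (h0 : ∀ p, 0 ≤ f p)
    (hc : ContinuousOn f (Set.Icc 0 T ×ˢ Set.univ))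
    (hd : ∀ t ∈ Set.Ioo 0 T, ∀ p, HasDerivAt (fun s => f (s, p)) (f (t, p) * ft (t, p)) t)
    (hftc : ContinuousOn ft (Set.Ioo 0 T ×ˢ Set.univ)) (hft : AuxPB T ft)
    (hmom : ∀ N : ℕ, ∃ c : ℝ, ∀ t ∈ Set.Ioo (0 : ℝ) T,
      Integrable (fun p : AuxE d × AuxE d => auxW p ^ N * f (t, p)) ∧
      ∫ p : AuxE d × AuxE d, auxW p ^ N * f (t, p) ≤ c) :
    ∃ Φ : AuxE d × AuxE d → ℝ, (∀ N : ℕ, Integrable (fun p => auxW p ^ N * Φ p)) ∧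
      ∀ t ∈ Set.Ioo 0 T, ∀ p, f (t, p) ≤ Φ p := by
  obtain ⟨C, k, hC, hb⟩ := hft
  have hmid : T / 2 ∈ Set.Ioo 0 T := ⟨by linarith, by linarith⟩
  have hslice : ∀ p, ContinuousOn (fun s => f (s, p)) (Set.Icc 0 T) := fun p =>
    hc.comp (by fun_prop) (fun s hs => ⟨hs, Set.mem_univ _⟩)
  have hslice2 : ∀ p, ContinuousOn (fun s => f (s, p) * ft (s, p)) (Set.Ioo 0 T) := fun p =>
    ((hslice p).mono Set.Ioo_subset_Icc_self).mul
    (hftc.comp (by fun_prop) (fun s hs => ⟨hs, Set.mem_univ _⟩))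
  refine ⟨fun p => f (T / 2, p) + C * auxW p ^ k * ∫ r in Set.Ioo 0 T, f (r, p), ?_, ?_⟩
  · intro N
    have h1 : Integrable (fun p : AuxE d × AuxE d =>
        ∫ r in Set.Ioo 0 T, auxW p ^ (N + k) * f (r, p)) := by
      obtain ⟨c, hcc⟩ := hmom (N + k)
      have hm : AEStronglyMeasurable (fun q : AuxX d => auxW q.2 ^ (N + k) * f q)
          ((volume.restrict (Set.Ioo 0 T)).prod volume) := by
        have e : (volume.restrict (Set.Ioo 0 T)).prod (volume : Measure (AuxE d × AuxE d))
            = (volume : Measure (AuxX d)).restrict (Set.Ioo 0 T ×ˢ Set.univ) := by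
          rw [show (volume : Measure (AuxX d)) = (volume : Measure ℝ).prod volume from rfl,
            ← Measure.prod_restrict, Measure.restrict_univ]
        rw [e]
        apply ContinuousOn.aestronglyMeasurable
        · apply ContinuousOn.mul
          · exact ((auxW_cont.comp continuous_snd).pow _).continuousOn
          · exact hc.mono (Set.prod_mono Set.Ioo_subset_Icc_self subset_rfl)
        · exact measurableSet_Ioo.prod MeasurableSet.univ
      have hI : Integrable (fun q : AuxX d => auxW q.2 ^ (N + k) * f q)
          ((volume.restrict (Set.Ioo 0 T)).prod volume) := by
        rw [integrable_prod_iff hm]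
        constructor
        · exact (ae_restrict_mem measurableSet_Ioo).mono fun r hr => (hcc r hr).1
        · apply Integrable.mono' (g := fun _ => c) (integrable_const c)
            hm.norm.integral_prod_right'
          refine (ae_restrict_mem measurableSet_Ioo).mono fun r hr => ?_
          rw [Real.norm_eq_abs, abs_of_nonneg (integral_nonneg fun _ => norm_nonneg _)]
          refine le_trans (le_of_eq ?_) (hcc r hr).2
          congr 1; ext p
          have := auxW_one_le p
          rw [Real.norm_eq_abs, abs_of_nonneg]
          exact mul_nonneg (by positivity) (h0 _)
      exact hI.integral_prod_right
    obtain ⟨c, hcc⟩ := hmom N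
    refine ((hcc _ hmid).1.add (h1.const_mul C)).congr ?_
    refine Filter.Eventually.of_forall fun p => ?_
    simp only [Pi.add_apply]
    rw [integral_const_mul]; ring
  · intro t ht p
    have hsub : Set.uIcc (T / 2) t ⊆ Set.Ioo 0 T := by
      intro s hs
      rcases Set.mem_uIcc.1 hs with h | h
      · exact ⟨by linarith [hmid.1, h.1], by linarith [ht.2, h.2]⟩
      · exact ⟨by linarith [ht.1, h.1], by linarith [hmid.2, h.2]⟩
    have ftc := intervalIntegral.integral_eq_sub_of_hasDerivAt (a := T / 2) (b := t)
      (f := fun s => f (s, p)) (f' := fun s => f (s, p) * ft (s, p))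
      (fun s hs => hd s (hsub hs) p) ((hslice2 p).mono hsub).intervalIntegrable
    have hW := auxW_one_le p
    have hfi : IntegrableOn (fun r => f (r, p)) (Set.Ioo 0 T) :=
      ((hslice p).integrableOn_compact isCompact_Icc).mono_set Set.Ioo_subset_Icc_self
    have hbd : |∫ s in (T / 2)..t, f (s, p) * ft (s, p)|
        ≤ C * auxW p ^ k * ∫ r in Set.Ioo 0 T, f (r, p) := by
      rw [← integral_const_mul]
      have a1 := intervalIntegral.norm_integral_le_integral_norm_uIoc
        (f := fun s => f (s, p) * ft (s, p)) (a := T / 2) (b := t) (μ := volume)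
      have hsub' : Set.uIoc (T / 2) t ⊆ Set.Ioo 0 T := Set.uIoc_subset_uIcc.trans hsub
      refine a1.trans ?_
      have a2 : ∫ s in Set.uIoc (T / 2) t, ‖f (s, p) * ft (s, p)‖
          ≤ ∫ s in Set.uIoc (T / 2) t, C * auxW p ^ k * f (s, p) := by
        apply setIntegral_mono_on
        · exact ((((hslice2 p).mono hsub).integrableOn_compact isCompact_uIcc).mono_set
            Set.uIoc_subset_uIcc).norm
        · exact (hfi.mono_set hsub').const_mul _
        · exact measurableSet_uIoc
        · intro s hs
          rw [norm_mul, Real.norm_eq_abs, Real.norm_eq_abs, abs_of_nonneg (h0 _), mul_comm]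
          exact mul_le_mul_of_nonneg_right (hb s (hsub' hs) p) (h0 _)
      refine a2.trans ?_
      apply setIntegral_mono_set (hfi.const_mul _)
      · exact Filter.Eventually.of_forall fun s => mul_nonneg (by positivity) (h0 _)
      · exact hsub'.eventuallyLE
    rw [ftc] at hbd
    have := le_abs_self (f (t, p) - f (T / 2, p))
    linarith


theorem aux_alg {d : ℕ} (A B κ G ψt rt : ℝ) (ξ u F Fd ψx ψi ψii rx ut R : Fin d → ℝ)
    (ux : Fin d → Fin d → ℝ)
    (K : -A * ψt - B * ∑ i, ξ i * ψx i + ∑ i, (Fd i - ψi i * F i)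
      = κ * ∑ i, (ψi i ^ 2 - ψii i + 1 - ψi i * ξ i))
    (M1 : A * rt + B * ∑ i, (ux i i + u i * rx i) = 0)
    (M2 : ∀ k, A * ut k + B * ∑ j, u j * ux k j + B * rx k = R k) :
    A * (-ψt * G + (-ψt - rt + ∑ k, (ξ k - u k) * (0 - ut k))) =
    ∑ i, ((-ψi i * (-F i * G + κ * (-ψi i + ξ i) * (G + 1))
        + (-Fd i * G - F i * (-ψi i + (ξ i - u i))
          + (κ * (-ψii i + 1) * (G + 1) + κ * (-ψi i + ξ i) * (-ψi i + (ξ i - u i)))))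
      + (-ψx i * (-B * ξ i * G) +
        (-B * ξ i * (-ψx i - rx i + ∑ k, (ξ k - u k) * (0 - ux k i)))))
    + (- ∑ i, Fd i + ∑ i, F i * (ξ i - u i) - κ * ∑ i, (-ψi i + ξ i) * (-ψi i + ξ i - u i)
      - (-B * ∑ i, ux i i + ∑ i, (ξ i - u i) * R i
        + B * ∑ i, ∑ j, (ξ i - u i) * (ξ j - u j) * ux i j)) := by
  set V : Fin d → ℝ := fun i => ∑ k, (ξ k - u k) * ux k i with hV
  set Y : Fin d → ℝ := fun k => ∑ j, u j * ux k j with hY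
  set Z : Fin d → ℝ := fun k => ∑ j, ξ j * ux k j with hZ
  have e0 : ∑ i, ξ i * V i = ∑ k, (ξ k - u k) * Z k := by
    simp only [hV, hZ, Finset.mul_sum]
    rw [Finset.sum_comm]
    refine Finset.sum_congr rfl fun i _ => Finset.sum_congr rfl fun j _ => by ring
  have e1 : ∀ i, ∑ k, (ξ k - u k) * (0 - ux k i) = - V i := by
    intro i; simp only [hV, ← Finset.sum_neg_distrib]
    exact Finset.sum_congr rfl fun j _ => by ring
  have e2 : ∀ i, ∑ j, (ξ i - u i) * (ξ j - u j) * ux i j = (ξ i - u i) * (Z i - Y i) := by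
    intro i; simp only [hZ, hY, ← Finset.sum_sub_distrib, Finset.mul_sum]
    exact Finset.sum_congr rfl fun j _ => by ring
  have e3 : ∀ i, R i = A * ut i + B * Y i + B * rx i := fun i => (M2 i).symm
  have K' : A * ψt = ∑ i, (-(B * (ξ i * ψx i)) + (Fd i - ψi i * F i)
      - κ * (ψi i ^ 2 - ψii i + 1 - ψi i * ξ i)) := by
    rw [Finset.sum_sub_distrib, Finset.sum_add_distrib, Finset.sum_neg_distrib, ← Finset.mul_sum,
      ← Finset.mul_sum]
    linarith
  have M1' : A * rt = ∑ i, -(B * (ux i i + u i * rx i)) := by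
    rw [Finset.sum_neg_distrib, ← Finset.mul_sum]; linarith
  have e0' : ∑ i, B * (ξ i * V i - (ξ i - u i) * Z i) = 0 := by
    rw [← Finset.mul_sum, Finset.sum_sub_distrib, e0]; ring
  simp only [e1, e2, e3]
  have : A * (-ψt * G + (-ψt - rt + ∑ k, (ξ k - u k) * (0 - ut k)))
    = -(A * ψt) * (G + 1) - A * rt + A * ∑ k, (ξ k - u k) * (0 - ut k)
      + ∑ i, B * (ξ i * V i - (ξ i - u i) * Z i) := by rw [e0']; ring
  rw [this, K', M1']
  simp only [Finset.sum_mul, Finset.mul_sum, ← Finset.sum_add_distrib, ← Finset.sum_sub_distrib,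
    ← Finset.sum_neg_distrib]
  exact Finset.sum_congr rfl fun i _ => by ring

/-- directions -/
noncomputable def auxdt (d : ℕ) : AuxX d := (1, 0, 0)
/-- directions -/
noncomputable def auxdx {d : ℕ} (i : Fin d) : AuxX d := (0, EuclideanSpace.single i 1, 0)
/-- directions -/
noncomputable def auxdv {d : ℕ} (i : Fin d) : AuxX d := (0, 0, EuclideanSpace.single i 1)

/-- The open time-phase domain. -/
def auxS (d : ℕ) (T : ℝ) : Set (AuxX d) := Set.Ioo 0 T ×ˢ Set.univ

theorem auxS_open (d : ℕ) (T : ℝ) : IsOpen (auxS d T) := isOpen_Ioo.prod isOpen_univ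

/-- log of the ratio f/M. -/
noncomputable def auxG {d : ℕ} (c0 : ℝ) (ψ r : AuxX d → ℝ) (u : Fin d → AuxX d → ℝ)
    (p : AuxX d) : ℝ :=
  -ψ p - r p + c0 + (1 / 2) * ∑ k, (p.2.2 k - u k p) ^ 2

/-- The hypotheses in coordinates. -/
structure AuxHyp (d : ℕ) (T A B κ : ℝ) (ψ r : AuxX d → ℝ) (F u R : Fin d → AuxX d → ℝ) : Prop where
  T_pos : 0 < T
  A_pos : 0 < A
  ψC : ContDiffOn ℝ 2 ψ (auxS d T)
  ψcont : ContinuousOn ψ (Set.Icc 0 T ×ˢ Set.univ)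
  FC : ∀ i, ContDiffOn ℝ 1 (F i) (auxS d T)
  rC : ContDiffOn ℝ 1 r (auxS d T)
  uC : ∀ i, ContDiffOn ℝ 1 (u i) (auxS d T)
  RC : ∀ i, ContinuousOn (R i) (auxS d T)
  ψB : AuxPB T ψ
  ψtB : AuxPB T (fun p => fderiv ℝ ψ p (auxdt d))
  ψxB : ∀ i, AuxPB T (fun p => fderiv ℝ ψ p (auxdx i))
  ψvB : ∀ i, AuxPB T (fun p => fderiv ℝ ψ p (auxdv i))
  ψvvB : ∀ i, AuxPB T (fun p => fderiv ℝ (fun q => fderiv ℝ ψ q (auxdv i)) p (auxdv i))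
  FB : ∀ i, AuxPB T (F i)
  FdB : AuxPB T (fun p => ∑ i, fderiv ℝ (F i) p (auxdv i))
  rB : AuxPB T r
  rtB : AuxPB T (fun p => fderiv ℝ r p (auxdt d))
  rxB : ∀ i, AuxPB T (fun p => fderiv ℝ r p (auxdx i))
  rv : ∀ p ∈ auxS d T, ∀ i, fderiv ℝ r p (auxdv i) = 0
  uB : ∀ i, AuxPB T (u i)
  utB : ∀ i, AuxPB T (fun p => fderiv ℝ (u i) p (auxdt d))
  uxB : ∀ i j, AuxPB T (fun p => fderiv ℝ (u i) p (auxdx j))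
  uv : ∀ p ∈ auxS d T, ∀ k i, fderiv ℝ (u k) p (auxdv i) = 0
  RB : ∀ i, AuxPB T (R i)
  K : ∀ p ∈ auxS d T, -A * fderiv ℝ ψ p (auxdt d) - B * ∑ i, p.2.2 i * fderiv ℝ ψ p (auxdx i)
      + ∑ i, (fderiv ℝ (F i) p (auxdv i) - fderiv ℝ ψ p (auxdv i) * F i p)
      = κ * ∑ i, (fderiv ℝ ψ p (auxdv i) ^ 2
        - fderiv ℝ (fun q => fderiv ℝ ψ q (auxdv i)) p (auxdv i) + 1
        - fderiv ℝ ψ p (auxdv i) * p.2.2 i)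
  M1 : ∀ p ∈ auxS d T, A * fderiv ℝ r p (auxdt d)
    + B * ∑ i, (fderiv ℝ (u i) p (auxdx i) + u i p * fderiv ℝ r p (auxdx i)) = 0
  M2 : ∀ p ∈ auxS d T, ∀ k, A * fderiv ℝ (u k) p (auxdt d)
    + B * ∑ j, u j p * fderiv ℝ (u k) p (auxdx j) + B * fderiv ℝ r p (auxdx k) = R k p
  mom : ∀ N : ℕ, ∃ c : ℝ, ∀ t ∈ Set.Ioo (0 : ℝ) T,
      Integrable (fun p : AuxE d × AuxE d => auxW p ^ N * Real.exp (-ψ (t, p))) ∧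
      ∫ p : AuxE d × AuxE d, auxW p ^ N * Real.exp (-ψ (t, p)) ≤ c

section
variable {d : ℕ} {T A B κ : ℝ} {ψ r : AuxX d → ℝ} {F u R : Fin d → AuxX d → ℝ}

theorem aux_hasF {h : AuxX d → ℝ} {n : WithTop ℕ∞} (hn : n ≠ 0) (hh : ContDiffOn ℝ n h (auxS d T))
    {p : AuxX d} (hp : p ∈ auxS d T) : HasFDerivAt h (fderiv ℝ h p) p :=
  ((hh.contDiffAt ((auxS_open d T).mem_nhds hp)).differentiableAt hn).hasFDerivAt

theorem aux_coord_hasF (k : Fin d) (p : AuxX d) :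
    HasFDerivAt (fun q : AuxX d => q.2.2 k)
      ((EuclideanSpace.proj k : AuxE d →L[ℝ] ℝ).comp
        ((ContinuousLinearMap.snd ℝ (AuxE d) (AuxE d)).comp
          (ContinuousLinearMap.snd ℝ ℝ (AuxE d × AuxE d)))) p :=
  ((EuclideanSpace.proj k : AuxE d →L[ℝ] ℝ).comp
        ((ContinuousLinearMap.snd ℝ (AuxE d) (AuxE d)).comp
          (ContinuousLinearMap.snd ℝ ℝ (AuxE d × AuxE d)))).hasFDerivAt

theorem aux_coord_contDiff (k : Fin d) : ContDiff ℝ 1 (fun q : AuxX d => q.2.2 k) :=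
  ((EuclideanSpace.proj k : AuxE d →L[ℝ] ℝ).comp
        ((ContinuousLinearMap.snd ℝ (AuxE d) (AuxE d)).comp
          (ContinuousLinearMap.snd ℝ ℝ (AuxE d × AuxE d)))).contDiff

theorem auxG_contDiffOn (c0 : ℝ) (H : AuxHyp d T A B κ ψ r F u R) :
    ContDiffOn ℝ 1 (auxG c0 ψ r u) (auxS d T) := by
  unfold auxG
  refine ((((H.ψC.of_le (by norm_num)).neg.sub H.rC).add contDiffOn_const)).add
    (contDiffOn_const.mul (ContDiffOn.sum fun k _ => ?_))
  exact ((aux_coord_contDiff k).contDiffOn.sub (H.uC k)).pow 2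

theorem auxG_fderiv (c0 : ℝ) (H : AuxHyp d T A B κ ψ r F u R) {p : AuxX d} (hp : p ∈ auxS d T)
    (w : AuxX d) : fderiv ℝ (auxG c0 ψ r u) p w =
      -fderiv ℝ ψ p w - fderiv ℝ r p w
      + ∑ k, (p.2.2 k - u k p) * (w.2.2 k - fderiv ℝ (u k) p w) := by
  have h1 := aux_hasF (by norm_num) H.ψC hp
  have h2 := aux_hasF (by norm_num) H.rC hp
  have h3 := fun k => aux_hasF (by norm_num) (H.uC k) hp
  have h4 : HasFDerivAt (auxG c0 ψ r u) _ p := ((h1.neg.sub h2).add_const c0).add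
    ((HasFDerivAt.fun_sum (u := Finset.univ)
      fun k _ => ((aux_coord_hasF k p).sub (h3 k)).pow 2).const_mul (1 / 2))
  rw [h4.fderiv]
  simp [Finset.mul_sum]
  refine Finset.sum_congr rfl fun k _ => by ring

theorem auxG_PB (c0 : ℝ) (H : AuxHyp d T A B κ ψ r F u R) : AuxPB T (auxG c0 ψ r u) := by
  unfold auxG
  refine ((H.ψB.neg.sub H.rB).add (AuxPB.const T c0)).add ((AuxPB.const T (1 / 2)).mul
    (AuxPB.sum _ fun k _ => ?_))
  simp_rw [sq]
  exact ((AuxPB.coord T k).sub (H.uB k)).mul ((AuxPB.coord T k).sub (H.uB k))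

theorem aux_slice_cont {h : AuxX d → ℝ} (hh : ContinuousOn h (auxS d T)) {t : ℝ}
    (ht : t ∈ Set.Ioo 0 T) : Continuous (fun p => h (t, p)) := by
  rw [← continuousOn_univ]
  exact hh.comp (by fun_prop) fun p _ => ⟨ht, Set.mem_univ _⟩

theorem aux_slice_contDiff {h : AuxX d → ℝ} (hh : ContDiffOn ℝ 1 h (auxS d T)) {t : ℝ}
    (ht : t ∈ Set.Ioo 0 T) : ContDiff ℝ 1 (fun p => h (t, p)) := by
  rw [← contDiffOn_univ]
  exact hh.comp (contDiff_prodMk_right t).contDiffOn fun p _ => ⟨ht, Set.mem_univ _⟩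

theorem aux_slice_fderiv {h : AuxX d → ℝ} (hh : ContDiffOn ℝ 1 h (auxS d T)) {t : ℝ}
    (ht : t ∈ Set.Ioo 0 T) (p v : AuxE d × AuxE d) :
    fderiv ℝ (fun p => h (t, p)) p v = fderiv ℝ h (t, p) (0, v) := by
  have h1 := aux_hasF one_ne_zero hh (p := (t, p)) ⟨ht, Set.mem_univ _⟩
  have h2 := h1.comp p (hasFDerivAt_prodMk_right t p)
  rw [show (fun p => h (t, p)) = h ∘ (fun p => (t, p)) from rfl, h2.fderiv]
  simp

theorem aux_slice_t {h : AuxX d → ℝ} (hh : ContDiffOn ℝ 1 h (auxS d T)) {t : ℝ}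
    (ht : t ∈ Set.Ioo 0 T) (p : AuxE d × AuxE d) :
    HasDerivAt (fun s => h (s, p)) (fderiv ℝ h (t, p) (auxdt d)) t := by
  have h1 := aux_hasF one_ne_zero hh (p := (t, p)) ⟨ht, Set.mem_univ _⟩
  have h2 := HasFDerivAt.comp (g := h) (f := fun s : ℝ => (s, p)) t h1
    (hasFDerivAt_prodMk_left (𝕜 := ℝ) t p)
  have := h2.hasDerivAt
  exact this.congr_deriv (by simp [auxdt]; rfl)

theorem aux_fderiv_cont {h : AuxX d → ℝ} (hh : ContDiffOn ℝ 1 h (auxS d T)) (w : AuxX d) :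
    ContinuousOn (fun p => fderiv ℝ h p w) (auxS d T) :=
  (hh.continuousOn_fderiv_of_isOpen (auxS_open d T) le_rfl).clm_apply continuousOn_const

theorem aux_ψv_contDiffOn (H : AuxHyp d T A B κ ψ r F u R) (w : AuxX d) :
    ContDiffOn ℝ 1 (fun q => fderiv ℝ ψ q w) (auxS d T) :=
  (H.ψC.fderiv_of_isOpen (auxS_open d T) (by norm_num)).clm_apply contDiffOn_const

/-- the flux in velocity -/
noncomputable def auxP (c0 κ : ℝ) (ψ r : AuxX d → ℝ) (F u : Fin d → AuxX d → ℝ) (i : Fin d)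
    (p : AuxX d) : ℝ :=
  -F i p * auxG c0 ψ r u p + κ * (-fderiv ℝ ψ p (auxdv i) + p.2.2 i) * (auxG c0 ψ r u p + 1)

/-- the flux in space -/
noncomputable def auxQ (c0 B : ℝ) (ψ r : AuxX d → ℝ) (u : Fin d → AuxX d → ℝ) (i : Fin d)
    (p : AuxX d) : ℝ :=
  -B * p.2.2 i * auxG c0 ψ r u p

/-- remainder integrand -/
noncomputable def auxRem (B κ : ℝ) (ψ : AuxX d → ℝ) (F u R : Fin d → AuxX d → ℝ) (p : AuxX d) : ℝ :=
  - ∑ i, fderiv ℝ (F i) p (auxdv i) + ∑ i, F i p * (p.2.2 i - u i p)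
    - κ * ∑ i, (-fderiv ℝ ψ p (auxdv i) + p.2.2 i) * (-fderiv ℝ ψ p (auxdv i) + p.2.2 i - u i p)
      - (-B * ∑ i, fderiv ℝ (u i) p (auxdx i) + ∑ i, (p.2.2 i - u i p) * R i p
        + B * ∑ i, ∑ j, (p.2.2 i - u i p) * (p.2.2 j - u j p) * fderiv ℝ (u i) p (auxdx j))

theorem auxE_contDiffOn (H : AuxHyp d T A B κ ψ r F u R) :
    ContDiffOn ℝ 1 (fun p => Real.exp (-ψ p)) (auxS d T) := (H.ψC.of_le (by norm_num)).neg.exp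

theorem auxP_contDiffOn (c0 : ℝ) (H : AuxHyp d T A B κ ψ r F u R) (i : Fin d) :
    ContDiffOn ℝ 1 (auxP c0 κ ψ r F u i) (auxS d T) :=
  ((H.FC i).neg.mul (auxG_contDiffOn c0 H)).add
    ((contDiffOn_const.mul ((aux_ψv_contDiffOn H _).neg.add
      (aux_coord_contDiff i).contDiffOn)).mul ((auxG_contDiffOn c0 H).add contDiffOn_const))

theorem auxQ_contDiffOn (c0 : ℝ) (H : AuxHyp d T A B κ ψ r F u R) (i : Fin d) :
    ContDiffOn ℝ 1 (auxQ c0 B ψ r u i) (auxS d T) :=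
  (contDiffOn_const.mul (aux_coord_contDiff i).contDiffOn).mul (auxG_contDiffOn c0 H)

theorem auxP_PB (c0 : ℝ) (H : AuxHyp d T A B κ ψ r F u R) (i : Fin d) :
    AuxPB T (auxP c0 κ ψ r F u i) :=
  ((H.FB i).neg.mul (auxG_PB c0 H)).add
    (((AuxPB.const T κ).mul ((H.ψvB i).neg.add
      (AuxPB.coord T i))).mul ((auxG_PB c0 H).add (AuxPB.const T 1)))

theorem auxQ_PB (c0 : ℝ) (H : AuxHyp d T A B κ ψ r F u R) (i : Fin d) :
    AuxPB T (auxQ c0 B ψ r u i) :=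
  ((AuxPB.const T (-B)).mul (AuxPB.coord T i)).mul (auxG_PB c0 H)

theorem auxRem_cont (H : AuxHyp d T A B κ ψ r F u R) :
    ContinuousOn (auxRem B κ ψ F u R) (auxS d T) := by
  have h1 := fun i => aux_fderiv_cont (H.FC i) (auxdv i)
  have h2 := fun i => (H.FC i).continuousOn
  have h3 := fun i => (H.uC i).continuousOn
  have h4 := fun i => (aux_ψv_contDiffOn H (auxdv i)).continuousOn
  have h5 := fun i j => aux_fderiv_cont (H.uC i) (auxdx j)
  have h6 := H.RC
  have h7 : ∀ i, ContinuousOn (fun p : AuxX d => p.2.2 i) (auxS d T) :=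
    fun i => (aux_coord_contDiff i).continuous.continuousOn
  unfold auxRem
  fun_prop

theorem auxRem_PB (H : AuxHyp d T A B κ ψ r F u R) : AuxPB T (auxRem B κ ψ F u R) := by
  have hx := fun i => (AuxPB.coord T i).sub (H.uB i)
  have ha := fun i => (H.ψvB i).neg.add (AuxPB.coord T i)
  exact ((H.FdB.neg.add (AuxPB.sum _ fun i _ => (H.FB i).mul (hx i))).sub
    ((AuxPB.const T κ).mul (AuxPB.sum _ fun i _ => (ha i).mul ((ha i).sub (H.uB i))))).sub
    ((((AuxPB.const T (-B)).mul (AuxPB.sum _ fun i _ => H.uxB i i)).add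
      (AuxPB.sum _ fun i _ => (hx i).mul (H.RB i))).add
      ((AuxPB.const T B).mul (AuxPB.sum _ fun i _ => AuxPB.sum _ fun j _ =>
        ((hx i).mul (hx j)).mul (H.uxB i j))))

/-- time derivative factor -/
noncomputable def auxD (c0 : ℝ) (ψ r : AuxX d → ℝ) (u : Fin d → AuxX d → ℝ) (p : AuxX d) : ℝ :=
  -fderiv ℝ ψ p (auxdt d) * auxG c0 ψ r u p +
    (-fderiv ℝ ψ p (auxdt d) - fderiv ℝ r p (auxdt d)
      + ∑ k, (p.2.2 k - u k p) * (0 - fderiv ℝ (u k) p (auxdt d)))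

theorem auxD_PB (c0 : ℝ) (H : AuxHyp d T A B κ ψ r F u R) : AuxPB T (auxD c0 ψ r u) :=
  (H.ψtB.neg.mul (auxG_PB c0 H)).add ((H.ψtB.neg.sub H.rtB).add
    (AuxPB.sum _ fun k _ => ((AuxPB.coord T k).sub (H.uB k)).mul
      ((AuxPB.const T 0).sub (H.utB k))))

theorem auxD_cont (c0 : ℝ) (H : AuxHyp d T A B κ ψ r F u R) :
    ContinuousOn (auxD c0 ψ r u) (auxS d T) := by
  have h1 := (auxG_contDiffOn c0 H).continuousOn
  have h2 := aux_fderiv_cont H.rC (auxdt d)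
  have h3 := fun i => (H.uC i).continuousOn
  have h4 := (aux_ψv_contDiffOn H (auxdt d)).continuousOn
  have h5 := fun i => aux_fderiv_cont (H.uC i) (auxdt d)
  have h7 : ∀ i, ContinuousOn (fun p : AuxX d => p.2.2 i) (auxS d T) :=
    fun i => (aux_coord_contDiff i).continuous.continuousOn
  unfold auxD
  fun_prop

theorem aux_fderiv_exp_mul (H : AuxHyp d T A B κ ψ r F u R) {h : AuxX d → ℝ}
    (hh : ContDiffOn ℝ 1 h (auxS d T)) {p : AuxX d} (hp : p ∈ auxS d T) (w : AuxX d) :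
    fderiv ℝ (fun q => Real.exp (-ψ q) * h q) p w
      = Real.exp (-ψ p) * (-fderiv ℝ ψ p w * h p + fderiv ℝ h p w) := by
  have h1 := aux_hasF (by norm_num) H.ψC hp
  have h2 := aux_hasF one_ne_zero hh hp
  have h3 := h1.neg.exp.mul h2
  rw [show (fun q => Real.exp (-ψ q) * h q) = (fun q => Real.exp ((-ψ) q)) * h from rfl, h3.fderiv]
  simp; ring

theorem auxP_fderiv (c0 : ℝ) (H : AuxHyp d T A B κ ψ r F u R) {p : AuxX d} (hp : p ∈ auxS d T)
    (i : Fin d) : fderiv ℝ (auxP c0 κ ψ r F u i) p (auxdv i) =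
      (-fderiv ℝ (F i) p (auxdv i) * auxG c0 ψ r u p
        - F i p * (-fderiv ℝ ψ p (auxdv i) + (p.2.2 i - u i p))
          + (κ * (-fderiv ℝ (fun q => fderiv ℝ ψ q (auxdv i)) p (auxdv i) + 1)
              * (auxG c0 ψ r u p + 1)
            + κ * (-fderiv ℝ ψ p (auxdv i) + p.2.2 i) *
              (-fderiv ℝ ψ p (auxdv i) + (p.2.2 i - u i p)))) := by
  have hG := aux_hasF one_ne_zero (auxG_contDiffOn c0 H) hp
  have hGi : fderiv ℝ (auxG c0 ψ r u) p (auxdv i)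
      = -fderiv ℝ ψ p (auxdv i) + (p.2.2 i - u i p) := by
    rw [auxG_fderiv c0 H hp, H.rv p hp]
    simp only [H.uv p hp]
    simp [auxdv]
  have hF := aux_hasF one_ne_zero (H.FC i) hp
  have hψ := aux_hasF one_ne_zero (aux_ψv_contDiffOn H (auxdv i)) hp
  have h4 : HasFDerivAt (auxP c0 κ ψ r F u i) _ p :=
    (hF.neg.mul hG).add (((hψ.neg.add (aux_coord_hasF i p)).const_mul κ).mul (hG.add_const 1))
  rw [h4.fderiv]
  simp [hGi]
  simp [auxdv]
  ring

theorem auxQ_fderiv (c0 : ℝ) (H : AuxHyp d T A B κ ψ r F u R) {p : AuxX d} (hp : p ∈ auxS d T)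
    (i : Fin d) : fderiv ℝ (auxQ c0 B ψ r u i) p (auxdx i) =
      (-B * p.2.2 i * (-fderiv ℝ ψ p (auxdx i) - fderiv ℝ r p (auxdx i)
        + ∑ k, (p.2.2 k - u k p) * (0 - fderiv ℝ (u k) p (auxdx i)))) := by
  have hG := aux_hasF one_ne_zero (auxG_contDiffOn c0 H) hp
  have hGi := auxG_fderiv c0 H hp (auxdx i)
  have h4 : HasFDerivAt (auxQ c0 B ψ r u i) _ p :=
    ((aux_coord_hasF i p).const_mul (-B)).mul hG
  rw [h4.fderiv]
  simp [hGi]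
  simp [auxdx]

theorem aux_pointwise (c0 : ℝ) (H : AuxHyp d T A B κ ψ r F u R) {p : AuxX d}
    (hp : p ∈ auxS d T) :
    A * (Real.exp (-ψ p) * auxD c0 ψ r u p) =
      ∑ i, (fderiv ℝ (fun q => Real.exp (-ψ q) * auxP c0 κ ψ r F u i q) p (auxdv i)
        + fderiv ℝ (fun q => Real.exp (-ψ q) * auxQ c0 B ψ r u i q) p (auxdx i))
      + Real.exp (-ψ p) * auxRem B κ ψ F u R p := by
  have := aux_alg A B κ (auxG c0 ψ r u p) _ _ (fun i => p.2.2 i) (fun i => u i p)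
    (fun i => F i p) (fun i => fderiv ℝ (F i) p (auxdv i)) _ (fun i => fderiv ℝ ψ p (auxdv i))
    _ _ _ _ _ (H.K p hp) (H.M1 p hp) (H.M2 p hp)
  simp_rw [aux_fderiv_exp_mul H (auxP_contDiffOn c0 H _) hp,
      aux_fderiv_exp_mul H (auxQ_contDiffOn c0 H _) hp, ← mul_add, auxP_fderiv c0 H hp,
      auxQ_fderiv c0 H hp]
  rw [← Finset.mul_sum, ← mul_add, mul_left_comm]
  congr 1

theorem aux_int (H : AuxHyp d T A B κ ψ r F u R) {h : AuxX d → ℝ} (hB : AuxPB T h)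
    (hc : ContinuousOn h (auxS d T)) {t : ℝ} (ht : t ∈ Set.Ioo 0 T) :
    Integrable (fun p => Real.exp (-ψ (t, p)) * h (t, p)) :=
  aux_integrable (f := fun p => Real.exp (-ψ p))
    (fun N t ht => ((H.mom N).choose_spec t ht).1) hB t ht
    (aux_slice_cont hc ht).aestronglyMeasurable
    (aux_slice_cont (auxE_contDiffOn H).continuousOn ht).aestronglyMeasurable

theorem aux_integral (c0 : ℝ) (H : AuxHyp d T A B κ ψ r F u R) {t : ℝ}
    (ht : t ∈ Set.Ioo 0 T) :
    ∫ p, Real.exp (-ψ (t, p)) * auxD c0 ψ r u (t, p)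
      = (1 / A) * ∫ p, Real.exp (-ψ (t, p)) * auxRem B κ ψ F u R (t, p) := by
  have hS : ∀ p : AuxE d × AuxE d, (t, p) ∈ auxS d T := fun p => ⟨ht, Set.mem_univ _⟩
  have i1 := aux_int H (auxD_PB c0 H) (auxD_cont c0 H) ht
  have i2 := aux_int H (auxRem_PB H) (auxRem_cont H) ht
  have hPC := fun i => (auxE_contDiffOn H).mul (auxP_contDiffOn c0 H i)
  have hQC := fun i => (auxE_contDiffOn H).mul (auxQ_contDiffOn c0 H i)
  let h : Fin d ⊕ Fin d → AuxE d × AuxE d → ℝ := Sum.elim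
    (fun i p => Real.exp (-ψ (t, p)) * auxP c0 κ ψ r F u i (t, p))
    (fun i p => Real.exp (-ψ (t, p)) * auxQ c0 B ψ r u i (t, p))
  let v : Fin d ⊕ Fin d → AuxE d × AuxE d := Sum.elim
    (fun i => (auxdv i).2) (fun i => (auxdx i).2)
  have hdiv : ∀ p, ∑ j, fderiv ℝ (h j) p (v j)
      = A * (Real.exp (-ψ (t, p)) * auxD c0 ψ r u (t, p))
        - Real.exp (-ψ (t, p)) * auxRem B κ ψ F u R (t, p) := by
    intro p
    rw [aux_pointwise c0 H (hS p), add_sub_cancel_right, Fintype.sum_sum_type,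
      Finset.sum_add_distrib]
    congr 1
    · refine Finset.sum_congr rfl fun i _ => ?_
      exact aux_slice_fderiv (hPC i) ht p _
    · refine Finset.sum_congr rfl fun i _ => ?_
      exact aux_slice_fderiv (hQC i) ht p _
  have : (volume : Measure (AuxE d × AuxE d)).IsAddHaarMeasure :=
    inferInstanceAs ((volume : Measure (AuxE d)).prod (volume : Measure (AuxE d))).IsAddHaarMeasure
  have hz := aux_integral_div_zero (volume : Measure (AuxE d × AuxE d)) Finset.univ v h
    (by
      rintro (i | i) _
      · exact aux_slice_contDiff (hPC i) ht
      · exact aux_slice_contDiff (hQC i) ht)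
    (by
      rintro (i | i) _
      · exact aux_int H (auxP_PB c0 H i) (auxP_contDiffOn c0 H i).continuousOn ht
      · exact aux_int H (auxQ_PB c0 H i) (auxQ_contDiffOn c0 H i).continuousOn ht)
    (by simp_rw [hdiv]; exact (i1.const_mul A).sub i2)
  simp_rw [hdiv] at hz
  rw [integral_sub (i1.const_mul A) i2, integral_const_mul, sub_eq_zero] at hz
  rw [← hz, one_div, inv_mul_cancel_left₀ H.A_pos.ne']

theorem aux_core (c0 : ℝ) (H : AuxHyp d T A B κ ψ r F u R) {t : ℝ}
    (ht : t ∈ Set.Ioo 0 T) :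
    HasDerivAt (fun s => ∫ p, Real.exp (-ψ (s, p)) * auxG c0 ψ r u (s, p))
      ((1 / A) * ∫ p, Real.exp (-ψ (t, p)) * auxRem B κ ψ F u R (t, p)) t := by
  rw [← aux_integral c0 H ht]
  have hψ1 : ContDiffOn ℝ 1 ψ (auxS d T) := H.ψC.of_le (by norm_num)
  obtain ⟨Φ, hΦ, hle⟩ := aux_dom H.T_pos (f := fun p => Real.exp (-ψ p))
    (ft := fun p => - fderiv ℝ ψ p (auxdt d)) (fun p => (Real.exp_pos _).le)
    H.ψcont.neg.rexp
    (fun t ht p => (aux_slice_t hψ1 ht p).neg.exp) (aux_fderiv_cont hψ1 _).neg H.ψtB.neg H.mom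
  obtain ⟨C, k, hC, hb⟩ := auxD_PB c0 H
  have hGC := (auxE_contDiffOn H).mul (auxG_contDiffOn c0 H)
  refine (hasDerivAt_integral_of_dominated_loc_of_deriv_le
    (F := fun s p => Real.exp (-ψ (s, p)) * auxG c0 ψ r u (s, p))
    (F' := fun s p => Real.exp (-ψ (s, p)) * auxD c0 ψ r u (s, p))
    (bound := fun p => C * (auxW p ^ k * Φ p)) (isOpen_Ioo.mem_nhds ht) ?_ ?_ ?_ ?_ ?_ ?_).2
  · filter_upwards [isOpen_Ioo.mem_nhds ht] with s hs
    exact (aux_slice_cont hGC.continuousOn hs).aestronglyMeasurable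
  · exact aux_int H (auxG_PB c0 H) (auxG_contDiffOn c0 H).continuousOn ht
  · exact (aux_int H (auxD_PB c0 H) (auxD_cont c0 H) ht).aestronglyMeasurable
  · refine Filter.Eventually.of_forall fun p s hs => ?_
    rw [norm_mul, Real.norm_eq_abs, Real.norm_eq_abs, abs_of_pos (Real.exp_pos _), mul_comm,
      ← mul_assoc]
    have := auxW_one_le p
    exact mul_le_mul (hb s hs p) (hle s hs p) (Real.exp_pos _).le (by positivity)
  · exact (hΦ k).const_mul C
  · refine Filter.Eventually.of_forall fun p s hs => ?_
    have h1 := aux_slice_t hGC hs p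
    have h2 := aux_fderiv_exp_mul H (auxG_contDiffOn c0 H) (p := (s, p)) ⟨hs, Set.mem_univ _⟩
      (auxdt d)
    rw [auxG_fderiv c0 H ⟨hs, Set.mem_univ _⟩] at h2
    have h3 : fderiv ℝ (fun q => Real.exp (-ψ q) * auxG c0 ψ r u q) (s, p) (auxdt d)
      = Real.exp (-ψ (s, p)) * auxD c0 ψ r u (s, p) := h2
    exact h3 ▸ h1
end


theorem aux_diss {d : ℕ} (f : AuxE d × AuxE d → ℝ) (a : AuxE d × AuxE d → AuxE d)
    (u : AuxE d → AuxE d) (hfpos : ∀ p, 0 < f p) (hfc : Continuous f) (hac : Continuous a)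
    (huc : Continuous u) (hf : Integrable f) (hfa : Integrable (fun p => f p * ‖a p‖ ^ 2))
    (hfx : Integrable (fun p => f p * ‖p.2‖ ^ 2)) (hfu : Integrable (fun p => f p * ‖u p.1‖ ^ 2))
    (ha : ∀ᵐ x : AuxE d, ∫ ξ, f (x, ξ) • a (x, ξ) = ∫ ξ, f (x, ξ) • ξ) :
    (∫ p : AuxE d × AuxE d, f p * ‖a p - (∫ ξ, f (p.1, ξ))⁻¹ • ∫ ξ, f (p.1, ξ) • ξ‖ ^ 2)
      + ∫ x : AuxE d, (∫ ξ, f (x, ξ)) * ⟪(∫ ξ, f (x, ξ))⁻¹ • ∫ ξ, f (x, ξ) • ξ,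
          ((∫ ξ, f (x, ξ))⁻¹ • ∫ ξ, f (x, ξ) • ξ) - u x⟫
      = ∫ p : AuxE d × AuxE d, f p * ⟪a p, a p - u p.1⟫ := by
  set ρ : AuxE d → ℝ := fun x => ∫ ξ, f (x, ξ) with hρ
  set m : AuxE d → AuxE d := fun x => ∫ ξ, f (x, ξ) • ξ with hm
  set U : AuxE d → AuxE d := fun x => (ρ x)⁻¹ • m x with hU
  change (∫ p : AuxE d × AuxE d, f p * ‖a p - U p.1‖ ^ 2) + ∫ x, ρ x * ⟪U x, U x - u x⟫ = _
  -- elementary products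
  have hL : ∀ b c : AuxE d × AuxE d → AuxE d, AEStronglyMeasurable b volume →
      AEStronglyMeasurable c volume → Integrable (fun p => f p * ‖b p‖ ^ 2) →
      Integrable (fun p => f p * ‖c p‖ ^ 2) → Integrable (fun p => f p * ⟪b p, c p⟫) := by
    intro b c hb hc h1 h2
    refine (h1.add h2).mono (hfc.aestronglyMeasurable.mul (hb.inner hc)) ?_
    refine Filter.Eventually.of_forall fun p => ?_
    have e : 0 ≤ f p * ‖b p‖ ^ 2 + f p * ‖c p‖ ^ 2 := by
      have := (hfpos p).le; positivity
    rw [norm_mul, Real.norm_eq_abs, abs_of_pos (hfpos p), Pi.add_apply, Real.norm_eq_abs,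
      Real.norm_eq_abs, abs_of_nonneg e, ← mul_add]
    refine mul_le_mul_of_nonneg_left ?_ (hfpos p).le
    have := abs_real_inner_le_norm (b p) (c p)
    nlinarith [sq_nonneg (‖b p‖ - ‖c p‖), sq_nonneg (‖b p‖), sq_nonneg (‖c p‖)]
  have hL1 : ∀ b : AuxE d × AuxE d → AuxE d, AEStronglyMeasurable b volume →
      Integrable (fun p => f p * ‖b p‖ ^ 2) → Integrable (fun p => f p • b p) := by
    intro b hb h1
    refine (hf.add h1).mono (hfc.aestronglyMeasurable.smul hb) ?_
    refine Filter.Eventually.of_forall fun p => ?_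
    have e : 0 ≤ f p + f p * ‖b p‖ ^ 2 := by
      have := (hfpos p).le; positivity
    rw [norm_smul, Real.norm_eq_abs, abs_of_pos (hfpos p), Pi.add_apply, Real.norm_eq_abs,
      abs_of_nonneg e]
    have h2 : ‖b p‖ ≤ 1 + ‖b p‖ ^ 2 := by nlinarith [sq_nonneg (‖b p‖ - 1), sq_nonneg (‖b p‖)]
    nlinarith [hfpos p]
  have hfxi := hL1 (fun p => p.2) continuous_snd.aestronglyMeasurable hfx
  have hfai := hL1 a hac.aestronglyMeasurable hfa
  have hρm : AEStronglyMeasurable ρ volume := hf.aestronglyMeasurable.integral_prod_right'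
  have hmm : AEStronglyMeasurable m volume := hfxi.aestronglyMeasurable.integral_prod_right'
  have hUm : AEStronglyMeasurable U volume := hρm.inv₀.smul hmm
  have hUm' : AEStronglyMeasurable (fun p : AuxE d × AuxE d => U p.1) volume := hUm.comp_fst
  have hρpos : ∀ᵐ x, 0 < ρ x := by
    filter_upwards [hf.prod_right_ae] with x hx
    rw [hρ]
    simp only
    rw [integral_pos_iff_support_of_nonneg (fun ξ => (hfpos _).le) hx]
    rw [show Function.support (fun ξ => f (x, ξ)) = Set.univ from
      Set.eq_univ_of_forall fun ξ => (hfpos _).ne']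
    exact isOpen_univ.measure_pos volume Set.univ_nonempty
  have hmU : ∀ᵐ x, m x = ρ x • U x := by
    filter_upwards [hρpos] with x hx
    rw [hU]; simp only; rw [smul_inv_smul₀ hx.ne']
  have hjensen : ∀ᵐ x, ρ x * ‖U x‖ ^ 2 ≤ ∫ ξ, f (x, ξ) * ‖ξ‖ ^ 2 := by
    filter_upwards [hf.prod_right_ae, hfxi.prod_right_ae, hfx.prod_right_ae, hmU]
      with x h1 h2 h3 h4
    have e : ∀ ξ, f (x, ξ) * ‖ξ - U x‖ ^ 2
        = f (x, ξ) * ‖ξ‖ ^ 2 - 2 * ⟪U x, f (x, ξ) • ξ⟫ + f (x, ξ) * ‖U x‖ ^ 2 := by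
      intro ξ
      rw [norm_sub_sq_real, real_inner_smul_right (U x) ξ, real_inner_comm ξ (U x)]; ring
    have h0 : 0 ≤ ∫ ξ, f (x, ξ) * ‖ξ - U x‖ ^ 2 :=
      integral_nonneg fun ξ => mul_nonneg (hfpos _).le (sq_nonneg _)
    simp_rw [e] at h0
    have s1 : Integrable (fun ξ => f (x, ξ) * ‖ξ‖ ^ 2 - 2 * ⟪U x, f (x, ξ) • ξ⟫) :=
      h3.sub ((h2.const_inner (U x)).const_mul 2)
    rw [integral_add s1 (h1.mul_const _),
      integral_sub h3 ((h2.const_inner (U x)).const_mul 2), integral_const_mul,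
      integral_inner h2, integral_mul_const] at h0
    have h5 : ⟪U x, ∫ ξ, f (x, ξ) • ξ⟫ = ρ x * ‖U x‖ ^ 2 := by
      rw [show ∫ ξ, f (x, ξ) • ξ = m x from rfl, h4, real_inner_smul_right,
        real_inner_self_eq_norm_sq]
    rw [h5] at h0
    have h6 : (∫ ξ, f (x, ξ)) * ‖U x‖ ^ 2 = ρ x * ‖U x‖ ^ 2 := rfl
    linarith
  have hfU : Integrable (fun p : AuxE d × AuxE d => f p * ‖U p.1‖ ^ 2) := by
    have hms : AEStronglyMeasurable (fun p : AuxE d × AuxE d => f p * ‖U p.1‖ ^ 2)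
      (volume.prod volume) := hfc.aestronglyMeasurable.mul (hUm'.norm.pow 2)
    refine (integrable_prod_iff hms).2 ⟨?_, ?_⟩
    · filter_upwards [hf.prod_right_ae] with x h1
      exact h1.mul_const _
    · refine (hfx.integral_prod_left).mono' hms.norm.integral_prod_right' ?_
      filter_upwards [hjensen] with x hx
      rw [Real.norm_eq_abs, abs_of_nonneg (integral_nonneg fun _ => norm_nonneg _)]
      refine le_trans (le_of_eq ?_) hx
      rw [hρ]; simp only
      rw [← integral_mul_const]
      congr 1; ext ξ
      rw [Real.norm_eq_abs, abs_of_nonneg (mul_nonneg (hfpos _).le (sq_nonneg _))]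
  have iaU := hL a (fun p => U p.1) hac.aestronglyMeasurable hUm' hfa hfU
  have iau := hL a (fun p => u p.1) hac.aestronglyMeasurable
    (huc.comp continuous_fst).aestronglyMeasurable hfa hfu
  -- Fubini
  have fub : ∀ w : AuxE d → AuxE d, Integrable (fun p : AuxE d × AuxE d => f p * ⟪a p, w p.1⟫) →
      Integrable (fun x => ρ x * ⟪U x, w x⟫) ∧
      ∫ p : AuxE d × AuxE d, f p * ⟪a p, w p.1⟫ = ∫ x, ρ x * ⟪U x, w x⟫ := by
    intro w hw
    have e : (fun x => ∫ ξ, f (x, ξ) * ⟪a (x, ξ), w x⟫) =ᵐ[volume] fun x => ρ x * ⟪U x, w x⟫ := by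
      filter_upwards [ha, hmU, hfai.prod_right_ae] with x h1 h2 h3
      have : ∀ ξ, f (x, ξ) * ⟪a (x, ξ), w x⟫ = ⟪w x, f (x, ξ) • a (x, ξ)⟫ := fun ξ => by
        rw [real_inner_smul_right, real_inner_comm]
      simp_rw [this]
      rw [integral_inner h3, h1, show ∫ ξ, f (x, ξ) • ξ = m x from rfl, h2, real_inner_smul_right,
        real_inner_comm]
    refine ⟨(hw.integral_prod_left).congr e, ?_⟩
    rw [← integral_congr_ae e]
    exact integral_prod _ hw
  obtain ⟨jU, eU⟩ := fub U iaU
  obtain ⟨ju, eu⟩ := fub u iau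
  have eUU : ∫ p : AuxE d × AuxE d, f p * ‖U p.1‖ ^ 2 = ∫ x, ρ x * ⟪U x, U x⟫ := by
    rw [show ∫ p : AuxE d × AuxE d, f p * ‖U p.1‖ ^ 2 = ∫ x, ∫ ξ, f (x, ξ) * ‖U x‖ ^ 2 from
      integral_prod _ hfU]
    congr 1; ext x
    rw [integral_mul_const, real_inner_self_eq_norm_sq]
  have e1 : ∀ p : AuxE d × AuxE d, f p * ‖a p - U p.1‖ ^ 2
      = f p * ‖a p‖ ^ 2 - 2 * (f p * ⟪a p, U p.1⟫) + f p * ‖U p.1‖ ^ 2 := fun p => by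
    rw [norm_sub_sq_real]; ring
  have e2 : ∀ x, ρ x * ⟪U x, U x - u x⟫ = ρ x * ⟪U x, U x⟫ - ρ x * ⟪U x, u x⟫ := fun x => by
    rw [inner_sub_right]; ring
  have e3 : ∀ p : AuxE d × AuxE d, f p * ⟪a p, a p - u p.1⟫
      = f p * ‖a p‖ ^ 2 - f p * ⟪a p, u p.1⟫ := fun p => by
    rw [inner_sub_right, real_inner_self_eq_norm_sq]; ring
  simp_rw [e1, e2, e3]
  have s2 : Integrable (fun p : AuxE d × AuxE d => f p * ‖a p‖ ^ 2 - 2 * (f p * ⟪a p, U p.1⟫)) :=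
    hfa.sub (iaU.const_mul 2)
  rw [integral_add s2 hfU, integral_sub hfa (iaU.const_mul 2),
    integral_const_mul, integral_sub jU ju, integral_sub hfa iau, eU, eu, eUU]
  ring


section
variable {d : ℕ} {T A B κ : ℝ} {ψ r : AuxX d → ℝ} {F u R : Fin d → AuxX d → ℝ}

theorem aux_sl_v {G : Type*} [NormedAddCommGroup G] [NormedSpace ℝ G] {h : AuxX d → G} {t : ℝ}
    {x ξ : AuxE d} (hh : DifferentiableAt ℝ h (t, x, ξ)) :
    HasFDerivAt (fun ζ => h (t, x, ζ)) ((fderiv ℝ h (t, x, ξ)).comp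
      ((ContinuousLinearMap.inr ℝ ℝ (AuxE d × AuxE d)).comp
        (ContinuousLinearMap.inr ℝ (AuxE d) (AuxE d)))) ξ :=
  HasFDerivAt.comp (g := h) (f := fun ζ => (t, x, ζ)) ξ hh.hasFDerivAt
    (HasFDerivAt.comp (g := fun p : AuxE d × AuxE d => (t, p)) (f := fun ζ => (x, ζ)) ξ
      (hasFDerivAt_prodMk_right t (x, ξ)) (hasFDerivAt_prodMk_right x ξ))

theorem aux_sl_x {G : Type*} [NormedAddCommGroup G] [NormedSpace ℝ G] {h : AuxX d → G} {t : ℝ}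
    {x ξ : AuxE d} (hh : DifferentiableAt ℝ h (t, x, ξ)) :
    HasFDerivAt (fun y => h (t, y, ξ)) ((fderiv ℝ h (t, x, ξ)).comp
      ((ContinuousLinearMap.inr ℝ ℝ (AuxE d × AuxE d)).comp
        (ContinuousLinearMap.inl ℝ (AuxE d) (AuxE d)))) x :=
  HasFDerivAt.comp (g := h) (f := fun y => (t, y, ξ)) x hh.hasFDerivAt
    (HasFDerivAt.comp (g := fun p : AuxE d × AuxE d => (t, p)) (f := fun y => (y, ξ)) x
      (hasFDerivAt_prodMk_right t (x, ξ)) (hasFDerivAt_prodMk_left x ξ))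

theorem aux_sl_t {G : Type*} [NormedAddCommGroup G] [NormedSpace ℝ G] {h : AuxX d → G} {t : ℝ}
    {p : AuxE d × AuxE d} (hh : DifferentiableAt ℝ h (t, p)) :
    HasDerivAt (fun s => h (s, p)) (fderiv ℝ h (t, p) (auxdt d)) t := by
  have h2 := HasFDerivAt.comp (g := h) (f := fun s : ℝ => (s, p)) t hh.hasFDerivAt
    (hasFDerivAt_prodMk_left (𝕜 := ℝ) t p)
  have := h2.hasDerivAt
  exact this.congr_deriv (by simp [auxdt]; rfl)

/-- The vector ξ - ∇_ξ ψ. -/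
noncomputable def auxA (ψ : AuxX d → ℝ) (p : AuxX d) : AuxE d :=
  WithLp.toLp 2 (fun i => p.2.2 i - fderiv ℝ ψ p (auxdv i))

theorem auxA_apply (ψ : AuxX d → ℝ) (p : AuxX d) (i : Fin d) :
    auxA ψ p i = p.2.2 i - fderiv ℝ ψ p (auxdv i) := rfl

theorem aux_int_coord {f : AuxE d → AuxE d} (hf : Integrable f) (i : Fin d) :
    (∫ ξ, f ξ) i = ∫ ξ, f ξ i :=
  ((EuclideanSpace.proj i : AuxE d →L[ℝ] ℝ).integral_comp_comm hf).symm

theorem aux_integrable_vec {X : Type*} [MeasurableSpace X] {μ : Measure X} {f : X → AuxE d}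
    (hf : ∀ i, Integrable (fun x => f x i) μ) : Integrable f μ := by
  have h1 : Integrable (fun x i => f x i) μ := Integrable.of_eval hf
  exact (PiLp.continuousLinearEquiv 2 ℝ (fun _ : Fin d => ℝ)).symm.toContinuousLinearMap.integrable_comp h1

theorem aux_mean (H : AuxHyp d T A B κ ψ r F u R) {t : ℝ} (ht : t ∈ Set.Ioo 0 T) :
    ∀ᵐ x : AuxE d, ∫ ξ, Real.exp (-ψ (t, x, ξ)) • auxA ψ (t, x, ξ)
      = ∫ ξ, Real.exp (-ψ (t, x, ξ)) • ξ := by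
  have ψC1 : ContDiffOn ℝ 1 ψ (auxS d T) := H.ψC.of_le (by norm_num)
  have i0 := aux_int H (AuxPB.const T 1) continuousOn_const ht
  have i1 : ∀ i : Fin d, _ := fun i => aux_int H (AuxPB.coord T i)
    (aux_coord_contDiff i).continuous.continuousOn ht
  have i2 : ∀ i : Fin d, _ := fun i => aux_int H (H.ψvB i) (aux_fderiv_cont ψC1 (auxdv i)) ht
  filter_upwards [i0.prod_right_ae, ae_all_iff.2 fun i => (i1 i).prod_right_ae,
    ae_all_iff.2 fun i => (i2 i).prod_right_ae] with x j0 j1 j2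
  have k1 : Integrable fun ξ => Real.exp (-ψ (t, x, ξ)) • auxA ψ (t, x, ξ) := by
    refine aux_integrable_vec fun i => ((j1 i).sub (j2 i)).congr ?_
    refine Filter.Eventually.of_forall fun ξ => ?_
    simp [auxA_apply, mul_sub]
  have k2 : Integrable fun ξ => Real.exp (-ψ (t, x, ξ)) • ξ :=
    aux_integrable_vec fun i => (j1 i)
  ext i
  rw [aux_int_coord k1, aux_int_coord k2]
  have e1 : ∀ ξ, (Real.exp (-ψ (t, x, ξ)) • auxA ψ (t, x, ξ)) i
      = (Real.exp (-ψ (t, x, ξ)) • ξ) i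
        - Real.exp (-ψ (t, x, ξ)) * fderiv ℝ ψ (t, x, ξ) (auxdv i) := fun ξ => by
    simp [auxA_apply, mul_sub]
  simp_rw [e1]
  have j1' : Integrable (fun ξ : AuxE d => (Real.exp (-ψ (t, x, ξ)) • ξ) i) := j1 i
  rw [integral_sub j1' (j2 i), sub_eq_self]
  have hd : ∀ ξ, fderiv ℝ (fun ζ => Real.exp (-ψ (t, x, ζ))) ξ (EuclideanSpace.single i 1)
      = - (Real.exp (-ψ (t, x, ξ)) * fderiv ℝ ψ (t, x, ξ) (auxdv i)) := fun ξ => by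
    have := aux_sl_v (aux_hasF one_ne_zero ψC1 (p := (t, x, ξ)) ⟨ht, Set.mem_univ _⟩).differentiableAt
    rw [this.fun_neg.exp.fderiv]
    simp [auxdv]
  have hcd : ContDiff ℝ 1 (fun ζ => Real.exp (-ψ (t, x, ζ))) := 
    (aux_slice_contDiff (auxE_contDiffOn H) ht).comp (contDiff_prodMk_right x)
  have := aux_integral_div_zero (volume : Measure (AuxE d)) {i}
    (fun i => EuclideanSpace.single i 1) (fun _ ζ => Real.exp (-ψ (t, x, ζ)))
    (fun _ _ => hcd) (fun _ _ => by simpa using j0) (by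
      simp only [Finset.sum_singleton, hd]
      exact (j2 i).neg)
  simp only [Finset.sum_singleton, hd] at this
  rw [integral_neg, neg_eq_zero] at this
  exact this

theorem aux_split (H : AuxHyp d T A B κ ψ r F u R) {t : ℝ} (ht : t ∈ Set.Ioo 0 T)
    (v : AuxE d → AuxE d) (hvc : Continuous v) (hv : ∀ p : AuxE d × AuxE d, ∀ i, v p.1 i = u i (t, p)) :
    (∫ p : AuxE d × AuxE d, Real.exp (-ψ (t, p)) * ‖auxA ψ (t, p)
        - (∫ ξ, Real.exp (-ψ (t, p.1, ξ)))⁻¹ • ∫ ξ, Real.exp (-ψ (t, p.1, ξ)) • ξ‖ ^ 2)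
      + ∫ x : AuxE d, (∫ ξ, Real.exp (-ψ (t, x, ξ))) *
          ⟪(∫ ξ, Real.exp (-ψ (t, x, ξ)))⁻¹ • ∫ ξ, Real.exp (-ψ (t, x, ξ)) • ξ,
          ((∫ ξ, Real.exp (-ψ (t, x, ξ)))⁻¹ • ∫ ξ, Real.exp (-ψ (t, x, ξ)) • ξ) - v x⟫
      = ∫ p : AuxE d × AuxE d, Real.exp (-ψ (t, p)) *
        ∑ i, (-fderiv ℝ ψ (t, p) (auxdv i) + p.2 i)
          * (-fderiv ℝ ψ (t, p) (auxdv i) + p.2 i - u i (t, p)) := by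
  have ψC1 : ContDiffOn ℝ 1 ψ (auxS d T) := H.ψC.of_le (by norm_num)
  have sq : ∀ (g : Fin d → AuxX d → ℝ), (∀ i, AuxPB T (g i)) →
      (∀ i, ContinuousOn (g i) (auxS d T)) → ∀ w : AuxE d × AuxE d → AuxE d,
      (∀ p i, w p i = g i (t, p)) →
      Integrable (fun p => Real.exp (-ψ (t, p)) * ‖w p‖ ^ 2) := by
    intro g hg hgc w hw
    refine (aux_int H (h := fun p => ∑ i, g i p * g i p)
      (AuxPB.sum _ fun i _ => (hg i).mul (hg i))
      (continuousOn_finsetSum _ fun i _ => (hgc i).mul (hgc i)) ht).congr ?_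
    refine Filter.Eventually.of_forall fun p => ?_
    simp only [EuclideanSpace.real_norm_sq_eq, hw]
    simp only [_root_.sq]
  have hAc : ∀ i, ContinuousOn (fun p => auxA ψ p i) (auxS d T) := fun i => by
    simp only [auxA_apply]
    exact (aux_coord_contDiff i).continuous.continuousOn.sub (aux_fderiv_cont ψC1 (auxdv i))
  have hAB : ∀ i, AuxPB T (fun p => auxA ψ p i) := fun i => by
    simp only [auxA_apply]
    exact (AuxPB.coord T i).sub (H.ψvB i)
  have hac : Continuous (fun p => auxA ψ (t, p)) := by
    have : Continuous (fun p i => auxA ψ (t, p) i) :=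
      continuous_pi fun i => aux_slice_cont (hAc i) ht
    exact (PiLp.continuousLinearEquiv 2 ℝ (fun _ : Fin d => ℝ)).symm.continuous.comp this
  have := aux_diss (fun p => Real.exp (-ψ (t, p))) (fun p => auxA ψ (t, p)) v
    (fun p => Real.exp_pos _) (aux_slice_cont (auxE_contDiffOn H).continuousOn ht) hac hvc
    (by simpa using aux_int H (AuxPB.const T 1) continuousOn_const ht)
    (sq _ hAB hAc _ fun p i => rfl)
    (sq (fun i p => p.2.2 i) (fun i => AuxPB.coord T i)
      (fun i => (aux_coord_contDiff i).continuous.continuousOn) _ fun p i => rfl)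
    (sq u H.uB (fun i => (H.uC i).continuousOn) _ hv)
    (aux_mean H ht)
  rw [this]
  congr 1; ext p
  congr 1
  rw [PiLp.inner_apply]
  refine Finset.sum_congr rfl fun i _ => ?_
  simp only [PiLp.sub_apply, auxA_apply, hv]
  simp
  ring
end


section
variable {d : ℕ} {T A B κ : ℝ} {ψ r : AuxX d → ℝ} {F u R : Fin d → AuxX d → ℝ}

theorem aux_iter (n : ℕ) (hψbound : ∃ c : ℝ, ∃ k : ℕ,
      ∀ t ∈ Set.Icc (0 : ℝ) T, ∀ x ξ : AuxE d,
        ‖iteratedFDerivWithin ℝ n ψ (Set.Icc 0 T ×ˢ (Set.univ : Set (AuxE d × AuxE d)))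
            (t, x, ξ)‖ ≤ c * (1 + ‖x‖ + ‖ξ‖) ^ k) :
    ∃ c : ℝ, ∃ k : ℕ, 0 ≤ c ∧ ∀ t ∈ Set.Ioo (0 : ℝ) T, ∀ p : AuxE d × AuxE d,
      ‖iteratedFDeriv ℝ n ψ (t, p)‖ ≤ c * auxW p ^ k := by
  obtain ⟨c, k, h⟩ := hψbound
  refine ⟨|c|, k, abs_nonneg _, fun t ht p => ?_⟩
  have h1 := h t ⟨ht.1.le, ht.2.le⟩ p.1 p.2
  have h2 : (Set.Icc 0 T ×ˢ (Set.univ : Set (AuxE d × AuxE d))) =ᶠ[nhds (t, p)] Set.univ := by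
    rw [Filter.eventuallyEq_univ]
    exact prod_mem_nhds (Icc_mem_nhds ht.1 ht.2) Filter.univ_mem
  rw [iteratedFDerivWithin_congr_set h2, iteratedFDerivWithin_univ] at h1
  refine h1.trans ?_
  have := auxW_one_le p
  exact mul_le_mul_of_nonneg_right (le_abs_self _) (pow_nonneg (by positivity) _)

theorem aux_PB_clm {L : AuxX d → (AuxX d →L[ℝ] ℝ)} {c : ℝ} {k : ℕ}
    (h : ∀ t ∈ Set.Ioo (0 : ℝ) T, ∀ p : AuxE d × AuxE d, ‖L (t, p)‖ ≤ c * auxW p ^ k) (w : AuxX d) :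
    AuxPB T (fun p => L p w) := by
  refine AuxPB.mk' (c * ‖w‖) k fun t ht p => ?_
  calc |L (t, p) w| ≤ ‖L (t, p)‖ * ‖w‖ := (L (t, p)).le_opNorm w
    _ ≤ (c * auxW p ^ k) * ‖w‖ := by gcongr; exact h t ht p
    _ = _ := by ring

theorem aux_ψB (hT : 0 < T) (hC : ContDiffOn ℝ 1 ψ (auxS d T)) {c : ℝ} {k : ℕ} (hc : 0 ≤ c)
    (h : ∀ t ∈ Set.Ioo (0 : ℝ) T, ∀ p : AuxE d × AuxE d, ‖fderiv ℝ ψ (t, p)‖ ≤ c * auxW p ^ k) :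
    AuxPB T ψ := by
  have key : AuxPB T (fun p => ψ p - ψ (T / 2, 0)) := by
    refine AuxPB.mk' (c * (T + 1)) (k + 1) fun t ht p => ?_
    have hW := auxW_one_le p
    have hn : ‖((t, p) : AuxX d) - (T / 2, 0)‖ ≤ (T + 1) * auxW p := by
      rw [Prod.mk_sub_mk, sub_zero, Prod.norm_def]
      have n1 : ‖t - T / 2‖ ≤ T := by
        rw [Real.norm_eq_abs, abs_le]; constructor <;> linarith [ht.1, ht.2]
      have n2 : ‖p‖ ≤ auxW p := by
        rw [Prod.norm_def]; unfold auxW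
        have := norm_nonneg p.1; have := norm_nonneg p.2
        exact max_le (by linarith) (by linarith)
      refine max_le ?_ ?_ <;> simp only <;> nlinarith
    have := Convex.norm_image_sub_le_of_norm_fderiv_le (𝕜 := ℝ) (f := ψ) (C := c * auxW p ^ k)
      (s := Set.Ioo 0 T ×ˢ (Metric.closedBall (0 : AuxE d) ‖p.1‖ ×ˢ
        Metric.closedBall (0 : AuxE d) ‖p.2‖)) (x := (T / 2, 0)) (y := (t, p))
      (fun q hq => (aux_hasF one_ne_zero hC (p := q) ⟨hq.1, Set.mem_univ _⟩).differentiableAt)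
      (fun q hq => ?_) ((convex_Ioo 0 T).prod ((convex_closedBall _ _).prod (convex_closedBall _ _)))
      ⟨⟨by linarith, by linarith⟩, by simp⟩ ⟨ht, by simp⟩
    · rw [Real.norm_eq_abs] at this
      refine this.trans ?_
      calc c * auxW p ^ k * ‖((t, p) : AuxX d) - (T / 2, 0)‖
          ≤ c * auxW p ^ k * ((T + 1) * auxW p) := by gcongr
        _ = _ := by ring
    · refine (h q.1 hq.1 q.2).trans ?_
      have h1 := hq.2.1
      have h2 := hq.2.2
      rw [mem_closedBall_zero_iff] at h1 h2
      have := auxW_one_le q.2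
      gcongr
      unfold auxW
      linarith
  exact (key.add (AuxPB.const T (ψ (T / 2, 0)))).congr fun t ht p => by ring

theorem aux_fderiv_coord {G : Type*} [NormedAddCommGroup G] [NormedSpace ℝ G] {V : G → AuxE d}
    {p : G} (hV : DifferentiableAt ℝ V p) (i : Fin d) (w : G) :
    fderiv ℝ (fun q => V q i) p w = fderiv ℝ V p w i := by
  have := (EuclideanSpace.proj i : AuxE d →L[ℝ] ℝ).hasFDerivAt.comp p hV.hasFDerivAt
  rw [show (fun q => V q i) = (EuclideanSpace.proj i : AuxE d →L[ℝ] ℝ) ∘ V from rfl, this.fderiv]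
  rfl

theorem aux_ediv_v {h : AuxX d → ℝ} {V : AuxX d → AuxE d} {t : ℝ} {x ξ : AuxE d}
    (hh : DifferentiableAt ℝ h (t, x, ξ)) (hV : DifferentiableAt ℝ V (t, x, ξ)) :
    ediv (fun ζ => h (t, x, ζ) • V (t, x, ζ)) ξ =
      ∑ i, (h (t, x, ξ) * fderiv ℝ (fun q => V q i) (t, x, ξ) (auxdv i)
        + fderiv ℝ h (t, x, ξ) (auxdv i) * V (t, x, ξ) i) := by
  unfold ediv
  rw [((aux_sl_v hh).fun_smul (aux_sl_v hV)).fderiv]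
  refine Finset.sum_congr rfl fun i _ => ?_
  rw [aux_fderiv_coord hV]
  simp [auxdv]

theorem aux_ediv_x {h : AuxX d → ℝ} {V : AuxX d → AuxE d} {t : ℝ} {x ξ : AuxE d}
    (hh : DifferentiableAt ℝ h (t, x, ξ)) (hV : DifferentiableAt ℝ V (t, x, ξ)) :
    ediv (fun y => h (t, y, ξ) • V (t, y, ξ)) x =
      ∑ i, (h (t, x, ξ) * fderiv ℝ (fun q => V q i) (t, x, ξ) (auxdx i)
        + fderiv ℝ h (t, x, ξ) (auxdx i) * V (t, x, ξ) i) := by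
  unfold ediv
  rw [((aux_sl_x hh).fun_smul (aux_sl_x hV)).fderiv]
  refine Finset.sum_congr rfl fun i _ => ?_
  rw [aux_fderiv_coord hV]
  simp [auxdx]

theorem aux_ediv_v' {V : AuxX d → AuxE d} {t : ℝ} {x ξ : AuxE d}
    (hV : DifferentiableAt ℝ V (t, x, ξ)) :
    ediv (fun ζ => V (t, x, ζ)) ξ =
      ∑ i, fderiv ℝ (fun q => V q i) (t, x, ξ) (auxdv i) := by
  unfold ediv
  rw [(aux_sl_v hV).fderiv]
  refine Finset.sum_congr rfl fun i _ => ?_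
  rw [aux_fderiv_coord hV]
  simp [auxdv]

theorem aux_grad_coord (g : AuxE d → ℝ) (x : AuxE d) (i : Fin d) :
    gradient g x i = fderiv ℝ g x (EuclideanSpace.single i 1) := by
  rw [← inner_gradient_left, EuclideanSpace.inner_single_right]
  simp

theorem aux_lin_sum (L : AuxE d →L[ℝ] ℝ) (ξ : AuxE d) :
    L ξ = ∑ i, ξ i * L (EuclideanSpace.single i 1) := by
  have h : ξ = ∑ i, ξ i • EuclideanSpace.single i (1 : ℝ) := by
    ext j
    simp [Finset.sum_apply, Pi.single_apply]
  conv_lhs => rw [h]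
  simp [map_sum]

theorem aux_auxA_diff (hC : ContDiffOn ℝ 2 ψ (auxS d T)) {p : AuxX d} (hp : p ∈ auxS d T) :
    DifferentiableAt ℝ (auxA ψ) p := by
  have h1 : DifferentiableAt ℝ (fun p i => p.2.2 i - fderiv ℝ ψ p (auxdv i) : AuxX d → Fin d → ℝ) p := by
    refine differentiableAt_pi.2 fun i => ?_
    refine (aux_coord_hasF i p).differentiableAt.sub ?_
    exact (aux_hasF one_ne_zero ((hC.fderiv_of_isOpen (auxS_open d T) (m := 1)
      (by norm_num)).clm_apply contDiffOn_const) hp).differentiableAt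
  exact ((PiLp.continuousLinearEquiv 2 ℝ (fun _ : Fin d => ℝ)).symm.differentiableAt).comp p h1

theorem aux_grad_v (hC : ContDiffOn ℝ 2 ψ (auxS d T)) {t : ℝ} (ht : t ∈ Set.Ioo 0 T) (x ξ : AuxE d) :
    gradient (fun ζ => Real.exp (-ψ (t, x, ζ))) ξ
      = Real.exp (-ψ (t, x, ξ)) • (auxA ψ (t, x, ξ) - ξ) := by
  ext i
  have := aux_sl_v (aux_hasF two_ne_zero hC (p := (t, x, ξ)) ⟨ht, Set.mem_univ _⟩).differentiableAt
  rw [aux_grad_coord, this.fun_neg.exp.fderiv]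
  simp [auxdv, auxA_apply]

theorem aux_K (hC : ContDiffOn ℝ 2 ψ (auxS d T)) {V : AuxX d → AuxE d} {t : ℝ} {x ξ : AuxE d}
    (ht : t ∈ Set.Ioo 0 T) (hV : DifferentiableAt ℝ V (t, x, ξ))
    (hkin : A * deriv (fun s => Real.exp (-ψ (s, x, ξ))) t
        + B * ⟪ξ, gradient (fun y => Real.exp (-ψ (t, y, ξ))) x⟫
        + ediv (fun ζ => Real.exp (-ψ (t, x, ζ)) • V (t, x, ζ)) ξ
      = κ * ediv (fun ζ => gradient (fun ζ' => Real.exp (-ψ (t, x, ζ'))) ζ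
          + Real.exp (-ψ (t, x, ζ)) • ζ) ξ) :
    -A * fderiv ℝ ψ (t, x, ξ) (auxdt d) - B * ∑ i, ξ i * fderiv ℝ ψ (t, x, ξ) (auxdx i)
      + ∑ i, (fderiv ℝ (fun q => V q i) (t, x, ξ) (auxdv i)
        - fderiv ℝ ψ (t, x, ξ) (auxdv i) * V (t, x, ξ) i)
      = κ * ∑ i, (fderiv ℝ ψ (t, x, ξ) (auxdv i) ^ 2
        - fderiv ℝ (fun q => fderiv ℝ ψ q (auxdv i)) (t, x, ξ) (auxdv i) + 1
        - fderiv ℝ ψ (t, x, ξ) (auxdv i) * ξ i) := by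
  have hp : (t, x, ξ) ∈ auxS d T := ⟨ht, Set.mem_univ _⟩
  have hd := (aux_hasF two_ne_zero hC hp)
  have hE := hd.fun_neg.exp
  have e1 : ∀ ζ, gradient (fun ζ' => Real.exp (-ψ (t, x, ζ'))) ζ
          + Real.exp (-ψ (t, x, ζ)) • ζ = Real.exp (-ψ (t, x, ζ)) • auxA ψ (t, x, ζ) := fun ζ => by
    rw [aux_grad_v hC ht, ← smul_add, sub_add_cancel]
  simp_rw [e1] at hkin
  have e2 := aux_ediv_v hE.differentiableAt (aux_auxA_diff hC hp)
  have e3 := aux_ediv_v hE.differentiableAt hV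
  have e4 := (aux_sl_t hd.differentiableAt).fun_neg.exp.deriv
  have e5 : ⟪ξ, gradient (fun y => Real.exp (-ψ (t, y, ξ))) x⟫
      = - (Real.exp (-ψ (t, x, ξ)) * ∑ i, ξ i * fderiv ℝ ψ (t, x, ξ) (auxdx i)) := by
    rw [inner_gradient_right, (aux_sl_x hd.differentiableAt).fun_neg.exp.fderiv, aux_lin_sum _ ξ]
    simp only [map_sum, Finset.mul_sum, ← Finset.sum_neg_distrib]
    refine Finset.sum_congr rfl fun i _ => ?_
    simp [auxdx]
    ring
  have e6 : ∀ i, fderiv ℝ (fun q => auxA ψ q i) (t, x, ξ) (auxdv i)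
      = 1 - fderiv ℝ (fun q => fderiv ℝ ψ q (auxdv i)) (t, x, ξ) (auxdv i) := fun i => by
    simp only [auxA_apply]
    have h1 := (aux_hasF one_ne_zero ((hC.fderiv_of_isOpen (auxS_open d T) (m := 1)
      (by norm_num)).clm_apply (contDiffOn_const (c := auxdv i))) hp)
    rw [((aux_coord_hasF i (t, x, ξ)).fun_sub h1).fderiv]
    simp [auxdv]
  rw [e2, e3, e4, e5, hE.fderiv] at hkin
  simp only [e6] at hkin
  simp only [auxA_apply] at hkin
  have hpos := Real.exp_pos (-ψ (t, x, ξ))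
  refine mul_left_cancel₀ hpos.ne' ?_
  have s1 : ∀ a b : Fin d → ℝ, ∑ i, (Real.exp (-ψ (t, x, ξ)) * a i
      + (Real.exp (-ψ (t, x, ξ)) • -fderiv ℝ ψ (t, x, ξ)) (auxdv i) * b i)
      = Real.exp (-ψ (t, x, ξ)) * ∑ i, (a i - fderiv ℝ ψ (t, x, ξ) (auxdv i) * b i) := by
    intro a b
    rw [Finset.mul_sum]
    refine Finset.sum_congr rfl fun i _ => ?_
    simp
    ring
  rw [s1 (fun i => fderiv ℝ (fun q => V q i) (t, x, ξ) (auxdv i)) (fun i => V (t, x, ξ) i),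
    s1 (fun i => 1 - fderiv ℝ (fun q => fderiv ℝ ψ q (auxdv i)) (t, x, ξ) (auxdv i))
      (fun i => ξ i - fderiv ℝ ψ (t, x, ξ) (auxdv i))] at hkin
  refine Eq.trans ?_ (hkin.trans ?_)
  · ring
  · rw [mul_left_comm]
    congr 2
    exact Finset.sum_congr rfl fun i _ => by ring
end


section
variable {d : ℕ} {T A B κ : ℝ} {ψ r : AuxX d → ℝ}

theorem aux_pull {G : Type*} [NormedAddCommGroup G] [NormedSpace ℝ G] {n : WithTop ℕ∞}
    {k : ℝ → AuxE d → G} (h : ContDiffOn ℝ n (fun p : ℝ × AuxE d => k p.1 p.2)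
      (Set.Ioo 0 T ×ˢ (Set.univ : Set (AuxE d)))) :
    ContDiffOn ℝ n (fun q : AuxX d => k q.1 q.2.1) (auxS d T) :=
  h.comp (g := fun p : ℝ × AuxE d => k p.1 p.2) (f := fun q : AuxX d => (q.1, q.2.1))
    (contDiff_fst.prodMk (contDiff_fst.comp contDiff_snd)).contDiffOn
    fun q hq => ⟨hq.1, Set.mem_univ _⟩

theorem aux_diffAt {G : Type*} [NormedAddCommGroup G] [NormedSpace ℝ G] {n : WithTop ℕ∞}
    (hn : n ≠ 0) {h : AuxX d → G} (hh : ContDiffOn ℝ n h (auxS d T)) {p : AuxX d}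
    (hp : p ∈ auxS d T) : DifferentiableAt ℝ h p :=
  (hh.contDiffAt ((auxS_open d T).mem_nhds hp)).differentiableAt hn

theorem aux_pull_v {G : Type*} [NormedAddCommGroup G] [NormedSpace ℝ G]
    {k : ℝ → AuxE d → G} {t : ℝ} {x ξ : AuxE d}
    (h : DifferentiableAt ℝ (fun q : AuxX d => k q.1 q.2.1) (t, x, ξ)) (i : Fin d) :
    fderiv ℝ (fun q : AuxX d => k q.1 q.2.1) (t, x, ξ) (auxdv i) = 0 := by
  have h1 := aux_sl_v h
  have h2 : HasFDerivAt (fun _ : AuxE d => k t x) (0 : AuxE d →L[ℝ] G) ξ := hasFDerivAt_const _ _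
  have h3 := h1.unique h2
  have := congrArg (fun L => L (EuclideanSpace.single i 1)) h3
  simpa [auxdv] using this

theorem aux_coord_cd {n : WithTop ℕ∞} {V : AuxX d → AuxE d} (hV : ContDiffOn ℝ n V (auxS d T))
    (i : Fin d) : ContDiffOn ℝ n (fun q => V q i) (auxS d T) :=
  (EuclideanSpace.proj i : AuxE d →L[ℝ] ℝ).contDiff.comp_contDiffOn hV

theorem aux_M {ρ : ℝ → AuxE d → ℝ} {u R : ℝ → AuxE d → AuxE d} {t : ℝ} {x ξ : AuxE d}
    (hρ : DifferentiableAt ℝ (fun q : AuxX d => ρ q.1 q.2.1) (t, x, ξ))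
    (hu : DifferentiableAt ℝ (fun q : AuxX d => u q.1 q.2.1) (t, x, ξ))
    (hpos : 0 < ρ t x)
    (hmass : A * deriv (fun s => ρ s x) t + B * ediv (fun y => ρ t y • u t y) x = 0)
    (hmom : ∀ i : Fin d, A * deriv (fun s => ρ s x * u s x i) t
        + B * ediv (fun y => (ρ t y * u t y i) • u t y) x
        + B * gradient (ρ t) x i = ρ t x * R t x i) :
    (A * fderiv ℝ (fun q : AuxX d => Real.log (ρ q.1 q.2.1)) (t, x, ξ) (auxdt d)
      + B * ∑ i, (fderiv ℝ (fun q : AuxX d => u q.1 q.2.1 i) (t, x, ξ) (auxdx i)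
        + u t x i * fderiv ℝ (fun q : AuxX d => Real.log (ρ q.1 q.2.1)) (t, x, ξ) (auxdx i)) = 0) ∧
    ∀ k, A * fderiv ℝ (fun q : AuxX d => u q.1 q.2.1 k) (t, x, ξ) (auxdt d)
      + B * ∑ j, u t x j * fderiv ℝ (fun q : AuxX d => u q.1 q.2.1 k) (t, x, ξ) (auxdx j)
      + B * fderiv ℝ (fun q : AuxX d => Real.log (ρ q.1 q.2.1)) (t, x, ξ) (auxdx k) = R t x k := by
  have hui : ∀ i, HasFDerivAt (fun q : AuxX d => u q.1 q.2.1 i)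
      (fderiv ℝ (fun q : AuxX d => u q.1 q.2.1 i) (t, x, ξ)) (t, x, ξ) := fun i =>
    (((EuclideanSpace.proj i : AuxE d →L[ℝ] ℝ).hasFDerivAt.comp (t, x, ξ)
      hu.hasFDerivAt).differentiableAt).hasFDerivAt
  have hr : ∀ w, fderiv ℝ (fun q : AuxX d => Real.log (ρ q.1 q.2.1)) (t, x, ξ) w
      = (ρ t x)⁻¹ * fderiv ℝ (fun q : AuxX d => ρ q.1 q.2.1) (t, x, ξ) w := fun w => by
    rw [(hρ.hasFDerivAt.log hpos.ne').fderiv]; rfl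
  have e1 : deriv (fun s => ρ s x) t = fderiv ℝ (fun q : AuxX d => ρ q.1 q.2.1) (t, x, ξ) (auxdt d) :=
    (aux_sl_t hρ).deriv
  have e2 : ediv (fun y => ρ t y • u t y) x =
      ∑ i, (ρ t x * fderiv ℝ (fun q : AuxX d => u q.1 q.2.1 i) (t, x, ξ) (auxdx i)
        + fderiv ℝ (fun q : AuxX d => ρ q.1 q.2.1) (t, x, ξ) (auxdx i) * u t x i) :=
    aux_ediv_x hρ hu
  have hρu := fun i => hρ.hasFDerivAt.fun_mul (hui i)
  have e3 : ∀ i, deriv (fun s => ρ s x * u s x i) t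
      = ρ t x * fderiv ℝ (fun q : AuxX d => u q.1 q.2.1 i) (t, x, ξ) (auxdt d)
        + u t x i * fderiv ℝ (fun q : AuxX d => ρ q.1 q.2.1) (t, x, ξ) (auxdt d) := fun i => by
    have := (aux_sl_t (hρu i).differentiableAt).deriv
    rw [(hρu i).fderiv] at this
    exact this
  have e4 : ∀ k, ediv (fun y => (ρ t y * u t y k) • u t y) x =
      ∑ i, ((ρ t x * u t x k) * fderiv ℝ (fun q : AuxX d => u q.1 q.2.1 i) (t, x, ξ) (auxdx i)
        + (ρ t x * fderiv ℝ (fun q : AuxX d => u q.1 q.2.1 k) (t, x, ξ) (auxdx i)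
        + u t x k * fderiv ℝ (fun q : AuxX d => ρ q.1 q.2.1) (t, x, ξ) (auxdx i)) * u t x i) :=
    fun k => by
      have := aux_ediv_x (hρu k).differentiableAt hu
      rw [(hρu k).fderiv] at this
      exact this
  have e5 : ∀ k, gradient (ρ t) x k = fderiv ℝ (fun q : AuxX d => ρ q.1 q.2.1) (t, x, ξ) (auxdx k) := by
    intro k
    rw [aux_grad_coord]
    have : HasFDerivAt (ρ t) _ x := aux_sl_x hρ
    rw [this.fderiv]; rfl
  rw [e1, e2] at hmass
  have m1 : (A * fderiv ℝ (fun q : AuxX d => Real.log (ρ q.1 q.2.1)) (t, x, ξ) (auxdt d)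
      + B * ∑ i, (fderiv ℝ (fun q : AuxX d => u q.1 q.2.1 i) (t, x, ξ) (auxdx i)
        + u t x i * fderiv ℝ (fun q : AuxX d => Real.log (ρ q.1 q.2.1)) (t, x, ξ) (auxdx i)) = 0) := by
    refine mul_left_cancel₀ hpos.ne' ?_
    rw [mul_zero, ← hmass]
    simp only [hr, mul_add, Finset.mul_sum, mul_left_comm (ρ t x)]
    congr 1
    · field_simp
    · refine Finset.sum_congr rfl fun i _ => ?_
      field_simp
  refine ⟨m1, fun k => ?_⟩
  have h := hmom k
  rw [e3, e4, e5] at h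
  refine mul_left_cancel₀ hpos.ne' ?_
  rw [← h]
  have key : ∑ i, ((ρ t x * u t x k) * fderiv ℝ (fun q : AuxX d => u q.1 q.2.1 i) (t, x, ξ) (auxdx i)
        + (ρ t x * fderiv ℝ (fun q : AuxX d => u q.1 q.2.1 k) (t, x, ξ) (auxdx i)
        + u t x k * fderiv ℝ (fun q : AuxX d => ρ q.1 q.2.1) (t, x, ξ) (auxdx i)) * u t x i)
      = u t x k * ∑ i, (ρ t x * fderiv ℝ (fun q : AuxX d => u q.1 q.2.1 i) (t, x, ξ) (auxdx i)
        + fderiv ℝ (fun q : AuxX d => ρ q.1 q.2.1) (t, x, ξ) (auxdx i) * u t x i)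
      + ρ t x * ∑ j, u t x j * fderiv ℝ (fun q : AuxX d => u q.1 q.2.1 k) (t, x, ξ) (auxdx j) := by
    rw [Finset.mul_sum, Finset.mul_sum, ← Finset.sum_add_distrib]
    exact Finset.sum_congr rfl fun i _ => by ring
  rw [key, hr]
  have h3 : ρ t x * (B * ((ρ t x)⁻¹ * fderiv ℝ (fun q : AuxX d => ρ q.1 q.2.1) (t, x, ξ) (auxdx k)))
    = B * fderiv ℝ (fun q : AuxX d => ρ q.1 q.2.1) (t, x, ξ) (auxdx k) := by field_simp
  rw [mul_add, h3]
  linear_combination (-u t x k) * hmass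

theorem aux_macro_PB {G : Type*} [NormedAddCommGroup G] {k : AuxX d → G} {h : AuxX d → ℝ} {c : ℝ}
    {n : ℕ} {C : ℝ} (hC : 0 ≤ C)
    (hk : ∀ t ∈ Set.Ioo (0 : ℝ) T, ∀ x ξ : AuxE d, ‖k (t, x, ξ)‖ ≤ c * (1 + ‖x‖) ^ n)
    (hh : ∀ t ∈ Set.Ioo (0 : ℝ) T, ∀ x ξ : AuxE d, |h (t, x, ξ)| ≤ C * ‖k (t, x, ξ)‖) :
    AuxPB T h := by
  refine AuxPB.mk' (C * |c|) n fun t ht p => (hh t ht p.1 p.2).trans ?_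
  rw [mul_assoc]
  refine mul_le_mul_of_nonneg_left ((hk t ht p.1 p.2).trans ?_) hC
  have h1 := norm_nonneg p.1
  have h2 := norm_nonneg p.2
  have h3 : (1 + ‖p.1‖) ^ n ≤ auxW p ^ n := by
    unfold auxW; exact pow_le_pow_left₀ (by positivity) (by linarith) n
  exact mul_le_mul (le_abs_self _) h3 (by positivity) (abs_nonneg _)
end


theorem aux_build
    (d : ℕ) (hd : 1 ≤ d) (T A B τ : ℝ) (hT : 0 < T) (hA : 0 < A) (hB : 0 < B) (hτ : 0 < τ)
    (ψ : ℝ × EuclideanSpace ℝ (Fin d) × EuclideanSpace ℝ (Fin d) → ℝ)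
    (hψ : ContDiffOn ℝ (⊤ : ℕ∞) ψ (Set.Icc 0 T ×ˢ
      (Set.univ : Set (EuclideanSpace ℝ (Fin d) × EuclideanSpace ℝ (Fin d)))))
    (hψbound : ∀ n : ℕ, 1 ≤ n → ∃ c : ℝ, ∃ k : ℕ,
      ∀ t ∈ Set.Icc (0 : ℝ) T, ∀ x ξ : EuclideanSpace ℝ (Fin d),
        ‖iteratedFDerivWithin ℝ n ψ
            (Set.Icc 0 T ×ˢ
              (Set.univ : Set (EuclideanSpace ℝ (Fin d) × EuclideanSpace ℝ (Fin d))))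
            (t, x, ξ)‖ ≤ c * (1 + ‖x‖ + ‖ξ‖) ^ k)
    (hfmom : ∀ N : ℕ, ∃ c : ℝ, ∀ t ∈ Set.Icc (0 : ℝ) T,
      Integrable (fun p : EuclideanSpace ℝ (Fin d) × EuclideanSpace ℝ (Fin d) =>
        (1 + ‖p.1‖ + ‖p.2‖) ^ N * Real.exp (-ψ (t, p.1, p.2))) ∧
      (∫ p : EuclideanSpace ℝ (Fin d) × EuclideanSpace ℝ (Fin d),
        (1 + ‖p.1‖ + ‖p.2‖) ^ N * Real.exp (-ψ (t, p.1, p.2))) ≤ c)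
    (F : ℝ × EuclideanSpace ℝ (Fin d) × EuclideanSpace ℝ (Fin d) → EuclideanSpace ℝ (Fin d))
    (hF : ContDiffOn ℝ 1 F (Set.Icc 0 T ×ˢ
      (Set.univ : Set (EuclideanSpace ℝ (Fin d) × EuclideanSpace ℝ (Fin d)))))
    (hFbound : ∃ c : ℝ, ∃ k : ℕ, ∀ t ∈ Set.Icc (0 : ℝ) T, ∀ x ξ : EuclideanSpace ℝ (Fin d),
      ‖F (t, x, ξ)‖ ≤ c * (1 + ‖x‖ + ‖ξ‖) ^ k ∧
      |ediv (fun ζ => F (t, x, ζ)) ξ| ≤ c * (1 + ‖x‖ + ‖ξ‖) ^ k)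
    (hkin : ∀ t ∈ Set.Ioo (0 : ℝ) T, ∀ x ξ : EuclideanSpace ℝ (Fin d),
      A * deriv (fun s => Real.exp (-ψ (s, x, ξ))) t
        + B * ⟪ξ, gradient (fun y => Real.exp (-ψ (t, y, ξ))) x⟫
        + ediv (fun ζ => Real.exp (-ψ (t, x, ζ)) • F (t, x, ζ)) ξ
      = (1 / τ) * ediv (fun ζ => gradient (fun ζ' => Real.exp (-ψ (t, x, ζ'))) ζ + Real.exp (-ψ (t, x, ζ)) • ζ) ξ)
    (ρ : ℝ → EuclideanSpace ℝ (Fin d) → ℝ)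
    (u R : ℝ → EuclideanSpace ℝ (Fin d) → EuclideanSpace ℝ (Fin d))
    (hρC1 : ContDiffOn ℝ 1 (fun p : ℝ × EuclideanSpace ℝ (Fin d) => ρ p.1 p.2)
      (Set.Ioo 0 T ×ˢ (Set.univ : Set (EuclideanSpace ℝ (Fin d)))))
    (huC1 : ContDiffOn ℝ 1 (fun p : ℝ × EuclideanSpace ℝ (Fin d) => u p.1 p.2)
      (Set.Ioo 0 T ×ˢ (Set.univ : Set (EuclideanSpace ℝ (Fin d)))))
    (hRC1 : ContDiffOn ℝ 1 (fun p : ℝ × EuclideanSpace ℝ (Fin d) => R p.1 p.2)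
      (Set.Ioo 0 T ×ˢ (Set.univ : Set (EuclideanSpace ℝ (Fin d)))))
    (hρpos : ∀ t ∈ Set.Ioo (0 : ℝ) T, ∀ x, 0 < ρ t x)
    (hmacrobound : ∃ c : ℝ, ∃ k : ℕ, ∀ t ∈ Set.Ioo (0 : ℝ) T, ∀ x : EuclideanSpace ℝ (Fin d),
      |Real.log (ρ t x)| ≤ c * (1 + ‖x‖) ^ k ∧
      ‖gradient (fun y => Real.log (ρ t y)) x‖ ≤ c * (1 + ‖x‖) ^ k ∧
      ‖u t x‖ ≤ c * (1 + ‖x‖) ^ k ∧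
      ‖fderiv ℝ (u t) x‖ ≤ c * (1 + ‖x‖) ^ k ∧
      ‖deriv (fun s => u s x) t‖ ≤ c * (1 + ‖x‖) ^ k ∧
      ‖R t x‖ ≤ c * (1 + ‖x‖) ^ k)
    (hmass : ∀ t ∈ Set.Ioo (0 : ℝ) T, ∀ x : EuclideanSpace ℝ (Fin d),
      A * deriv (fun s => ρ s x) t + B * ediv (fun y => ρ t y • u t y) x = 0)
    (hmom : ∀ t ∈ Set.Ioo (0 : ℝ) T, ∀ x : EuclideanSpace ℝ (Fin d), ∀ i : Fin d,
      A * deriv (fun s => ρ s x * u s x i) t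
        + B * ediv (fun y => (ρ t y * u t y i) • u t y) x
        + B * gradient (ρ t) x i
      = ρ t x * R t x i) :
    AuxHyp d T A B (1 / τ) ψ (fun q => Real.log (ρ q.1 q.2.1)) (fun i q => F q i)
      (fun i q => u q.1 q.2.1 i) (fun i q => R q.1 q.2.1 i) := by
  have hsub : auxS d T ⊆ Set.Icc 0 T ×ˢ (Set.univ : Set (AuxE d × AuxE d)) :=
    Set.prod_mono Set.Ioo_subset_Icc_self subset_rfl
  have mem : ∀ t ∈ Set.Ioo (0 : ℝ) T, ∀ p : AuxE d × AuxE d, (t, p) ∈ auxS d T :=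
    fun t ht p => ⟨ht, Set.mem_univ _⟩
  have ψC : ContDiffOn ℝ 2 ψ (auxS d T) := (hψ.mono hsub).of_le (WithTop.coe_le_coe.2 (le_top : (2 : ℕ∞) ≤ ⊤))
  have ψC1 : ContDiffOn ℝ 1 ψ (auxS d T) := ψC.of_le (by norm_num)
  obtain ⟨c1, k1, hc1, b1⟩ := aux_iter 1 (hψbound 1 le_rfl)
  obtain ⟨c2, k2, hc2, b2⟩ := aux_iter 2 (hψbound 2 (by norm_num))
  simp only [norm_iteratedFDeriv_one] at b1
  have b2' : ∀ t ∈ Set.Ioo (0 : ℝ) T, ∀ p : AuxE d × AuxE d,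
      ‖fderiv ℝ (fderiv ℝ ψ) (t, p)‖ ≤ c2 * auxW p ^ k2 := by
    intro t ht p
    have := b2 t ht p
    rwa [show (2 : ℕ) = 1 + 1 from rfl, ← norm_iteratedFDeriv_fderiv, norm_iteratedFDeriv_one] at this
  have FC : ContDiffOn ℝ 1 F (auxS d T) := hF.mono hsub
  obtain ⟨cF, kF, bF⟩ := hFbound
  have ρC := aux_pull (T := T) hρC1
  have uC := aux_pull (T := T) huC1
  have RC := aux_pull (T := T) hRC1
  have uCi : ∀ i, ContDiffOn ℝ 1 (fun q : AuxX d => u q.1 q.2.1 i) (auxS d T) :=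
    fun i => aux_coord_cd uC i
  have rC : ContDiffOn ℝ 1 (fun q : AuxX d => Real.log (ρ q.1 q.2.1)) (auxS d T) :=
    ρC.log fun q hq => (hρpos q.1 hq.1 q.2.1).ne'
  obtain ⟨cM, kM, bM⟩ := hmacrobound
  have hM : ∀ t ∈ Set.Ioo (0 : ℝ) T, ∀ x ξ : AuxE d, _ := fun t ht x ξ =>
    aux_M (ρ := ρ) (u := u) (R := R) (A := A) (B := B) (t := t) (x := x) (ξ := ξ)
      (aux_diffAt one_ne_zero ρC (mem t ht (x, ξ)))
      (aux_diffAt one_ne_zero uC (mem t ht (x, ξ))) (hρpos t ht x) (hmass t ht x)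
      (hmom t ht x)
  have uxB : ∀ i j, AuxPB T (fun p => fderiv ℝ (fun q : AuxX d => u q.1 q.2.1 i) p (auxdx j)) := by
    intro i j
    refine aux_macro_PB (k := fun q : AuxX d => fderiv ℝ (u q.1) q.2.1) zero_le_one
      (fun t ht x ξ => (bM t ht x).2.2.2.1) fun t ht x ξ => ?_
    have hd := aux_diffAt one_ne_zero uC (mem t ht (x, ξ))
    have h1 : HasFDerivAt (u t) _ x := aux_sl_x hd
    rw [aux_fderiv_coord hd]
    simp only [one_mul]
    have h2 : fderiv ℝ (fun q : AuxX d => u q.1 q.2.1) (t, x, ξ) (auxdx j)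
        = fderiv ℝ (u t) x (EuclideanSpace.single j 1) := by rw [h1.fderiv]; rfl
    rw [h2, ← Real.norm_eq_abs]
    refine (PiLp.norm_apply_le _ i).trans ?_
    refine ((fderiv ℝ (u t) x).le_opNorm _).trans ?_
    simp
  have rxB : ∀ i, AuxPB T (fun p => fderiv ℝ (fun q : AuxX d => Real.log (ρ q.1 q.2.1)) p (auxdx i)) := by
    intro i
    refine aux_macro_PB (k := fun q : AuxX d => gradient (fun y => Real.log (ρ q.1 y)) q.2.1)
      zero_le_one (fun t ht x ξ => (bM t ht x).2.1) fun t ht x ξ => ?_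
    have hd := aux_diffAt one_ne_zero rC (mem t ht (x, ξ))
    have h1 : HasFDerivAt (fun y => Real.log (ρ t y)) _ x := aux_sl_x hd
    have h2 : fderiv ℝ (fun q : AuxX d => Real.log (ρ q.1 q.2.1)) (t, x, ξ) (auxdx i)
        = gradient (fun y => Real.log (ρ t y)) x i := by
      rw [aux_grad_coord, h1.fderiv]; rfl
    rw [h2, ← Real.norm_eq_abs, one_mul]
    exact PiLp.norm_apply_le _ i
  have uB : ∀ i, AuxPB T (fun q : AuxX d => u q.1 q.2.1 i) := fun i =>
    aux_macro_PB (k := fun q : AuxX d => u q.1 q.2.1) zero_le_one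
      (fun t ht x ξ => (bM t ht x).2.2.1) fun t ht x ξ => by
        rw [← Real.norm_eq_abs, one_mul]; exact PiLp.norm_apply_le _ i
  refine
    { T_pos := hT
      A_pos := hA
      ψC := ψC
      ψcont := hψ.continuousOn
      FC := fun i => aux_coord_cd FC i
      rC := rC
      uC := uCi
      RC := fun i => (aux_coord_cd RC i).continuousOn
      ψB := aux_ψB hT ψC1 hc1 b1
      ψtB := aux_PB_clm b1 _
      ψxB := fun i => aux_PB_clm b1 _
      ψvB := fun i => aux_PB_clm b1 _
      ψvvB := ?_
      FB := ?_
      FdB := ?_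
      rB := ?_
      rtB := ?_
      rxB := rxB
      rv := ?_
      uB := uB
      utB := ?_
      uxB := uxB
      uv := ?_
      RB := ?_
      K := ?_
      M1 := ?_
      M2 := ?_
      mom := ?_ }
  · intro i
    refine AuxPB.mk' (c2 * (‖(auxdv i : AuxX d)‖ * ‖(auxdv i : AuxX d)‖)) k2 fun t ht p => ?_
    have hd : DifferentiableAt ℝ (fderiv ℝ ψ) (t, p) := aux_diffAt one_ne_zero
      (ψC.fderiv_of_isOpen (auxS_open d T) (m := 1) (by norm_num)) (mem t ht p)
    have h1 := hd.hasFDerivAt.clm_apply (hasFDerivAt_const (auxdv i : AuxX d) (t, p))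
    rw [h1.fderiv]
    have h2 := (fderiv ℝ (fderiv ℝ ψ) (t, p)).le_opNorm₂ (auxdv i) (auxdv i)
    rw [Real.norm_eq_abs] at h2
    have h3 := b2' t ht p
    simp only [ContinuousLinearMap.comp_zero, zero_add, ContinuousLinearMap.flip_apply]
    refine h2.trans ?_
    rw [mul_assoc]
    calc _ ≤ (c2 * auxW p ^ k2) * (‖(auxdv i : AuxX d)‖ * ‖(auxdv i : AuxX d)‖) := by gcongr
      _ = _ := by ring
  · intro i
    refine AuxPB.mk' cF kF fun t ht p => ?_
    rw [← Real.norm_eq_abs]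
    exact (PiLp.norm_apply_le _ i).trans (bF t (Set.Ioo_subset_Icc_self ht) p.1 p.2).1
  · refine AuxPB.mk' cF kF fun t ht p => ?_
    have := (bF t (Set.Ioo_subset_Icc_self ht) p.1 p.2).2
    rwa [aux_ediv_v' (aux_diffAt one_ne_zero FC (mem t ht (p.1, p.2)))] at this
  · exact aux_macro_PB (k := fun q : AuxX d => Real.log (ρ q.1 q.2.1)) zero_le_one
      (fun t ht x ξ => (bM t ht x).1) fun t ht x ξ => by rw [Real.norm_eq_abs, one_mul]
  · refine ((AuxPB.const T (-(B / A))).mul (AuxPB.sum Finset.univ fun i _ =>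
      (uxB i i).add ((uB i).mul (rxB i)))).congr fun t ht p => ?_
    have := (hM t ht p.1 p.2).1
    field_simp
    linarith
  · rintro ⟨t, x, ξ⟩ hp i
    exact aux_pull_v (k := fun t x => Real.log (ρ t x)) (aux_diffAt one_ne_zero rC hp) i
  · intro i
    refine aux_macro_PB (k := fun q : AuxX d => deriv (fun s => u s q.2.1) q.1) zero_le_one
      (fun t ht x ξ => (bM t ht x).2.2.2.2.1) fun t ht x ξ => ?_
    have hd := aux_diffAt one_ne_zero uC (mem t ht (x, ξ))
    have h1 : HasDerivAt (fun s => u s x) _ t := aux_sl_t hd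
    rw [aux_fderiv_coord hd, h1.deriv, ← Real.norm_eq_abs, one_mul]
    exact PiLp.norm_apply_le _ i
  · rintro ⟨t, x, ξ⟩ hp k i
    exact aux_pull_v (k := fun t x => u t x k) (aux_diffAt one_ne_zero (uCi k) hp) i
  · exact fun i =>
    aux_macro_PB (k := fun q : AuxX d => R q.1 q.2.1) zero_le_one
      (fun t ht x ξ => (bM t ht x).2.2.2.2.2) fun t ht x ξ => by
        rw [← Real.norm_eq_abs, one_mul]; exact PiLp.norm_apply_le _ i
  · rintro ⟨t, x, ξ⟩ hp
    exact aux_K ψC hp.1 (aux_diffAt one_ne_zero FC hp) (hkin t hp.1 x ξ)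
  · rintro ⟨t, x, ξ⟩ hp
    exact (hM t hp.1 x ξ).1
  · rintro ⟨t, x, ξ⟩ hp
    exact (hM t hp.1 x ξ).2
  · intro N
    obtain ⟨c, hc⟩ := hfmom N
    exact ⟨c, fun t ht => hc t (Set.Ioo_subset_Icc_self ht)⟩


/-- Relative entropy identity for the kinetic equation
`A ∂_t f + B ξ·∇_x f + ∇_ξ·(F f) = (1/τ) ∇_ξ·(∇_ξ f + ξ f)`
against the macroscopic system `A ∂_t ρ + B ∇·(ρ u) = 0`,
`A ∂_t(ρ u) + B ∇·(ρ u⊗u) + B ∇ρ = ρ R`. -/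
theorem relative_entropy_identity
    (d : ℕ) (hd : 1 ≤ d) (T A B τ : ℝ) (hT : 0 < T) (hA : 0 < A) (hB : 0 < B) (hτ : 0 < τ)
    (ψ f : ℝ × EuclideanSpace ℝ (Fin d) × EuclideanSpace ℝ (Fin d) → ℝ)
    (hf : f = fun p => Real.exp (-ψ p))
    (hψ : ContDiffOn ℝ (⊤ : ℕ∞) ψ (Set.Icc 0 T ×ˢ
      (Set.univ : Set (EuclideanSpace ℝ (Fin d) × EuclideanSpace ℝ (Fin d)))))
    (hψbound : ∀ n : ℕ, 1 ≤ n → ∃ c : ℝ, ∃ k : ℕ,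
      ∀ t ∈ Set.Icc (0 : ℝ) T, ∀ x ξ : EuclideanSpace ℝ (Fin d),
        ‖iteratedFDerivWithin ℝ n ψ
            (Set.Icc 0 T ×ˢ
              (Set.univ : Set (EuclideanSpace ℝ (Fin d) × EuclideanSpace ℝ (Fin d))))
            (t, x, ξ)‖ ≤ c * (1 + ‖x‖ + ‖ξ‖) ^ k)
    (hfmom : ∀ N : ℕ, ∃ c : ℝ, ∀ t ∈ Set.Icc (0 : ℝ) T,
      Integrable (fun p : EuclideanSpace ℝ (Fin d) × EuclideanSpace ℝ (Fin d) =>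
        (1 + ‖p.1‖ + ‖p.2‖) ^ N * f (t, p.1, p.2)) ∧
      (∫ p : EuclideanSpace ℝ (Fin d) × EuclideanSpace ℝ (Fin d),
        (1 + ‖p.1‖ + ‖p.2‖) ^ N * f (t, p.1, p.2)) ≤ c)
    (F : ℝ × EuclideanSpace ℝ (Fin d) × EuclideanSpace ℝ (Fin d) → EuclideanSpace ℝ (Fin d))
    (hF : ContDiffOn ℝ 1 F (Set.Icc 0 T ×ˢ
      (Set.univ : Set (EuclideanSpace ℝ (Fin d) × EuclideanSpace ℝ (Fin d)))))
    (hFbound : ∃ c : ℝ, ∃ k : ℕ, ∀ t ∈ Set.Icc (0 : ℝ) T, ∀ x ξ : EuclideanSpace ℝ (Fin d),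
      ‖F (t, x, ξ)‖ ≤ c * (1 + ‖x‖ + ‖ξ‖) ^ k ∧
      |ediv (fun ζ => F (t, x, ζ)) ξ| ≤ c * (1 + ‖x‖ + ‖ξ‖) ^ k)
    (hkin : ∀ t ∈ Set.Ioo (0 : ℝ) T, ∀ x ξ : EuclideanSpace ℝ (Fin d),
      A * deriv (fun s => f (s, x, ξ)) t
        + B * ⟪ξ, gradient (fun y => f (t, y, ξ)) x⟫
        + ediv (fun ζ => f (t, x, ζ) • F (t, x, ζ)) ξ
      = (1 / τ) * ediv (fun ζ => gradient (fun ζ' => f (t, x, ζ')) ζ + f (t, x, ζ) • ζ) ξ)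
    (ρ : ℝ → EuclideanSpace ℝ (Fin d) → ℝ)
    (u R : ℝ → EuclideanSpace ℝ (Fin d) → EuclideanSpace ℝ (Fin d))
    (hρC1 : ContDiffOn ℝ 1 (fun p : ℝ × EuclideanSpace ℝ (Fin d) => ρ p.1 p.2)
      (Set.Ioo 0 T ×ˢ (Set.univ : Set (EuclideanSpace ℝ (Fin d)))))
    (huC1 : ContDiffOn ℝ 1 (fun p : ℝ × EuclideanSpace ℝ (Fin d) => u p.1 p.2)
      (Set.Ioo 0 T ×ˢ (Set.univ : Set (EuclideanSpace ℝ (Fin d)))))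
    (hRC1 : ContDiffOn ℝ 1 (fun p : ℝ × EuclideanSpace ℝ (Fin d) => R p.1 p.2)
      (Set.Ioo 0 T ×ˢ (Set.univ : Set (EuclideanSpace ℝ (Fin d)))))
    (hρpos : ∀ t ∈ Set.Ioo (0 : ℝ) T, ∀ x, 0 < ρ t x)
    (hmacrobound : ∃ c : ℝ, ∃ k : ℕ, ∀ t ∈ Set.Ioo (0 : ℝ) T, ∀ x : EuclideanSpace ℝ (Fin d),
      |Real.log (ρ t x)| ≤ c * (1 + ‖x‖) ^ k ∧
      ‖gradient (fun y => Real.log (ρ t y)) x‖ ≤ c * (1 + ‖x‖) ^ k ∧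
      ‖u t x‖ ≤ c * (1 + ‖x‖) ^ k ∧
      ‖fderiv ℝ (u t) x‖ ≤ c * (1 + ‖x‖) ^ k ∧
      ‖deriv (fun s => u s x) t‖ ≤ c * (1 + ‖x‖) ^ k ∧
      ‖R t x‖ ≤ c * (1 + ‖x‖) ^ k)
    (hmass : ∀ t ∈ Set.Ioo (0 : ℝ) T, ∀ x : EuclideanSpace ℝ (Fin d),
      A * deriv (fun s => ρ s x) t + B * ediv (fun y => ρ t y • u t y) x = 0)
    (hmom : ∀ t ∈ Set.Ioo (0 : ℝ) T, ∀ x : EuclideanSpace ℝ (Fin d), ∀ i : Fin d,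
      A * deriv (fun s => ρ s x * u s x i) t
        + B * ediv (fun y => (ρ t y * u t y i) • u t y) x
        + B * gradient (ρ t) x i
      = ρ t x * R t x i) :
    ∀ t ∈ Set.Ioo (0 : ℝ) T,
      HasDerivAt
        (fun s => ∫ p : EuclideanSpace ℝ (Fin d) × EuclideanSpace ℝ (Fin d),
          f (s, p.1, p.2) *
            Real.log (f (s, p.1, p.2) / maxwellian d (ρ s p.1) (u s p.1) p.2))
        (-(1 / (A * τ)) * (∫ p : EuclideanSpace ℝ (Fin d) × EuclideanSpace ℝ (Fin d),
              (f (t, p.1, p.2))⁻¹ *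
                ‖gradient (fun ζ => f (t, p.1, ζ)) p.2
                  + f (t, p.1, p.2) •
                    (p.2 - (∫ ξ, f (t, p.1, ξ))⁻¹ • ∫ ξ, f (t, p.1, ξ) • ξ)‖ ^ 2)
          - (B / A) * (∫ p : EuclideanSpace ℝ (Fin d) × EuclideanSpace ℝ (Fin d),
              f (t, p.1, p.2) *
                ∑ i, ∑ j,
                  ((u t p.1 - p.2) i * (u t p.1 - p.2) j
                      - if i = j then (1 : ℝ) else 0) *
                    fderiv ℝ (u t) p.1 (EuclideanSpace.single j 1) i)
          - (1 / (A * τ)) * (∫ x : EuclideanSpace ℝ (Fin d),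
              (∫ ξ, f (t, x, ξ)) *
                ⟪(∫ ξ, f (t, x, ξ))⁻¹ • ∫ ξ, f (t, x, ξ) • ξ,
                  ((∫ ξ, f (t, x, ξ))⁻¹ • ∫ ξ, f (t, x, ξ) • ξ) - u t x⟫)
          - (1 / A) * (∫ p : EuclideanSpace ℝ (Fin d) × EuclideanSpace ℝ (Fin d),
              ediv (fun ζ => F (t, p.1, ζ)) p.2 * f (t, p.1, p.2))
          - (1 / A) * (∫ p : EuclideanSpace ℝ (Fin d) × EuclideanSpace ℝ (Fin d),
              f (t, p.1, p.2) * ⟪u t p.1 - p.2, F (t, p.1, p.2) - R t p.1⟫)) t := by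
  subst hf
  have H := aux_build d hd T A B τ hT hA hB hτ ψ hψ hψbound hfmom F hF hFbound hkin ρ u R hρC1 huC1
    hRC1 hρpos hmacrobound hmass hmom
  intro t ht
  have mem : ∀ t ∈ Set.Ioo (0 : ℝ) T, ∀ p : AuxE d × AuxE d, (t, p) ∈ auxS d T :=
    fun t ht p => ⟨ht, Set.mem_univ _⟩
  have uC := aux_pull (T := T) huC1
  have FC : ContDiffOn ℝ 1 F (auxS d T) := hF.mono (Set.prod_mono Set.Ioo_subset_Icc_self subset_rfl)
  have core := aux_core ((d : ℝ) / 2 * Real.log (2 * π)) H ht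
  have huc : Continuous (u t) := by
    rw [← continuousOn_univ]
    exact huC1.continuousOn.comp (f := fun x => (t, x)) (by fun_prop)
      fun x _ => ⟨ht, Set.mem_univ _⟩
  have split := aux_split H ht (u t) huc (fun p i => rfl)
  have hlog : ∀ s ∈ Set.Ioo (0 : ℝ) T, ∀ p : AuxE d × AuxE d,
      Real.exp (-ψ (s, p.1, p.2)) * Real.log (Real.exp (-ψ (s, p.1, p.2)) /
        maxwellian d (ρ s p.1) (u s p.1) p.2) =
      Real.exp (-ψ (s, p)) * auxG ((d : ℝ) / 2 * Real.log (2 * π)) ψ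
        (fun q => Real.log (ρ q.1 q.2.1)) (fun i q => u q.1 q.2.1 i) (s, p) := by
    intro s hs p
    have h1 := hρpos s hs p.1
    have h2 : 0 < (2 * π) ^ (-(d : ℝ) / 2) := by positivity
    unfold maxwellian auxG
    rw [Real.log_div (Real.exp_pos _).ne' (by positivity), Real.log_mul (by positivity)
      (Real.exp_pos _).ne', Real.log_mul h1.ne' h2.ne', Real.log_exp, Real.log_exp,
      Real.log_rpow (by positivity), EuclideanSpace.real_norm_sq_eq]
    simp only [PiLp.sub_apply]
    ring
  have heq : (fun s => ∫ p : AuxE d × AuxE d, Real.exp (-ψ (s, p.1, p.2)) *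
        Real.log (Real.exp (-ψ (s, p.1, p.2)) / maxwellian d (ρ s p.1) (u s p.1) p.2))
      =ᶠ[nhds t] fun s => ∫ p, Real.exp (-ψ (s, p)) * auxG ((d : ℝ) / 2 * Real.log (2 * π)) ψ
        (fun q => Real.log (ρ q.1 q.2.1)) (fun i q => u q.1 q.2.1 i) (s, p) := by
    filter_upwards [Ioo_mem_nhds ht.1 ht.2] with s hs
    exact integral_congr_ae (Filter.Eventually.of_forall fun p => hlog s hs p)
  refine (core.congr_of_eventuallyEq heq).congr_deriv ?_
  -- pointwise rewriting of the integrands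
  have hdiss : ∀ p : AuxE d × AuxE d, (Real.exp (-ψ (t, p.1, p.2)))⁻¹ *
      ‖gradient (fun ζ => Real.exp (-ψ (t, p.1, ζ))) p.2 + Real.exp (-ψ (t, p.1, p.2)) •
        (p.2 - (∫ ξ, Real.exp (-ψ (t, p.1, ξ)))⁻¹ • ∫ ξ, Real.exp (-ψ (t, p.1, ξ)) • ξ)‖ ^ 2
      = Real.exp (-ψ (t, p)) * ‖auxA ψ (t, p)
        - (∫ ξ, Real.exp (-ψ (t, p.1, ξ)))⁻¹ • ∫ ξ, Real.exp (-ψ (t, p.1, ξ)) • ξ‖ ^ 2 := by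
    intro p
    rw [aux_grad_v H.ψC ht, ← smul_add, sub_add_sub_cancel, norm_smul, Real.norm_eq_abs,
      abs_of_pos (Real.exp_pos _)]
    have := (Real.exp_pos (-ψ (t, p.1, p.2))).ne'
    field_simp
  have hU : ∀ p : AuxE d × AuxE d, ∀ i j, fderiv ℝ (u t) p.1 (EuclideanSpace.single j 1) i
      = fderiv ℝ (fun q : AuxX d => u q.1 q.2.1 i) (t, p) (auxdx j) := by
    intro p i j
    have hd' := aux_diffAt one_ne_zero uC (mem t ht (p.1, p.2))
    have h1 : HasFDerivAt (u t) _ p.1 := aux_sl_x hd'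
    rw [h1.fderiv]
    exact (aux_fderiv_coord hd' i (auxdx j)).symm
  have hFd : ∀ p : AuxE d × AuxE d, ediv (fun ζ => F (t, p.1, ζ)) p.2
      = ∑ i, fderiv ℝ (fun q => F q i) (t, p) (auxdv i) := fun p =>
    aux_ediv_v' (aux_diffAt one_ne_zero FC (mem t ht (p.1, p.2)))
  simp_rw [hdiss, hU, hFd]
  -- the four integrands
  set g1 : AuxX d → ℝ := fun p => ∑ i, (-fderiv ℝ ψ p (auxdv i) + p.2.2 i)
          * (-fderiv ℝ ψ p (auxdv i) + p.2.2 i - u p.1 p.2.1 i) with hg1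
  set g2 : AuxX d → ℝ := fun p => ∑ i, ∑ j, ((u p.1 p.2.1 - p.2.2) i * (u p.1 p.2.1 - p.2.2) j
      - if i = j then (1 : ℝ) else 0) * fderiv ℝ (fun q : AuxX d => u q.1 q.2.1 i) p (auxdx j)
    with hg2
  set g3 : AuxX d → ℝ := fun p => ∑ i, fderiv ℝ (fun q => F q i) p (auxdv i) with hg3
  set g4 : AuxX d → ℝ := fun p => ∑ i, (u p.1 p.2.1 i - p.2.2 i) * (F p i - R p.1 p.2.1 i) with hg4
  have cψ : ∀ i : Fin d, ContinuousOn (fun p => fderiv ℝ ψ p (auxdv i)) (auxS d T) := fun i =>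
    (aux_ψv_contDiffOn H (auxdv i)).continuousOn
  have cξ : ∀ i : Fin d, ContinuousOn (fun p : AuxX d => p.2.2 i) (auxS d T) := fun i =>
    (aux_coord_contDiff i).continuous.continuousOn
  have cu : ∀ i : Fin d, ContinuousOn (fun p : AuxX d => u p.1 p.2.1 i) (auxS d T) := fun i =>
    (H.uC i).continuousOn
  have i1 : Integrable (fun p => Real.exp (-ψ (t, p)) * g1 (t, p)) := aux_int H
    (AuxPB.sum _ fun i _ => ((H.ψvB i).neg.add (AuxPB.coord T i)).mul
      (((H.ψvB i).neg.add (AuxPB.coord T i)).sub (H.uB i)))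
    (continuousOn_finsetSum _ fun i _ => ((cψ i).neg.add (cξ i)).mul
      (((cψ i).neg.add (cξ i)).sub (cu i))) ht
  have i2 : Integrable (fun p => Real.exp (-ψ (t, p)) * g2 (t, p)) := aux_int H
    (AuxPB.sum _ fun i _ => AuxPB.sum _ fun j _ =>
      ((((H.uB i).sub (AuxPB.coord T i)).mul ((H.uB j).sub (AuxPB.coord T j))).sub
        (AuxPB.const T _)).mul (H.uxB i j))
    (continuousOn_finsetSum _ fun i _ => continuousOn_finsetSum _ fun j _ =>
      ((((cu i).sub (cξ i)).mul ((cu j).sub (cξ j))).sub continuousOn_const).mul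
        (aux_fderiv_cont (H.uC i) (auxdx j))) ht
  have i3 : Integrable (fun p => Real.exp (-ψ (t, p)) * g3 (t, p)) := aux_int H H.FdB
    (continuousOn_finsetSum _ fun i _ => aux_fderiv_cont (H.FC i) (auxdv i)) ht
  have i4 : Integrable (fun p => Real.exp (-ψ (t, p)) * g4 (t, p)) := aux_int H
    (AuxPB.sum _ fun i _ => ((H.uB i).sub (AuxPB.coord T i)).mul ((H.FB i).sub (H.RB i)))
    (continuousOn_finsetSum _ fun i _ => ((cu i).sub (cξ i)).mul
      ((H.FC i).continuousOn.sub (H.RC i))) ht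
  have hrem : ∀ p : AuxE d × AuxE d, Real.exp (-ψ (t, p)) * auxRem B (1 / τ) ψ (fun i q => F q i)
      (fun i q => u q.1 q.2.1 i) (fun i q => R q.1 q.2.1 i) (t, p)
      = -(1 / τ) * (Real.exp (-ψ (t, p)) * g1 (t, p)) - B * (Real.exp (-ψ (t, p)) * g2 (t, p))
        - Real.exp (-ψ (t, p)) * g3 (t, p) - Real.exp (-ψ (t, p)) * g4 (t, p) := by
    intro p
    have a2 : g2 (t, p) = ∑ i, ∑ j, (p.2 i - u t p.1 i) * (p.2 j - u t p.1 j)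
          * fderiv ℝ (fun q : AuxX d => u q.1 q.2.1 i) (t, p) (auxdx j)
        - ∑ i, fderiv ℝ (fun q : AuxX d => u q.1 q.2.1 i) (t, p) (auxdx i) := by
      rw [← Finset.sum_sub_distrib]
      refine Finset.sum_congr rfl fun i _ => ?_
      simp only [sub_mul, ite_mul, one_mul, zero_mul, Finset.sum_sub_distrib, Finset.sum_ite_eq,
        Finset.mem_univ, if_true, PiLp.sub_apply]
      simp only [← Finset.sum_sub_distrib]
      congr 1
      exact Finset.sum_congr rfl fun j _ => by ring
    have a4 : g4 (t, p) = ∑ i, (p.2 i - u t p.1 i) * R t p.1 i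
        - ∑ i, F (t, p) i * (p.2 i - u t p.1 i) := by
      rw [← Finset.sum_sub_distrib]
      exact Finset.sum_congr rfl fun i _ => by ring
    rw [a2, a4]
    simp only [auxRem, hg1, hg3]
    ring
  simp_rw [hrem]
  have s1 : Integrable (fun p => -(1 / τ) * (Real.exp (-ψ (t, p)) * g1 (t, p))
      - B * (Real.exp (-ψ (t, p)) * g2 (t, p))) := (i1.const_mul _).sub (i2.const_mul _)
  have s2 : Integrable (fun p => -(1 / τ) * (Real.exp (-ψ (t, p)) * g1 (t, p))
      - B * (Real.exp (-ψ (t, p)) * g2 (t, p)) - Real.exp (-ψ (t, p)) * g3 (t, p)) := s1.sub i3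
  rw [integral_sub s2 i4, integral_sub s1 i3, integral_sub (i1.const_mul _) (i2.const_mul _),
    integral_const_mul, integral_const_mul]
  have t1 : ∫ p : AuxE d × AuxE d, Real.exp (-ψ (t, p)) * g1 (t, p) = _ := split.symm
  rw [t1]
  have t2 : ∫ p : AuxE d × AuxE d, Real.exp (-ψ (t, p.1, p.2)) *
      ⟪u t p.1 - p.2, F (t, p.1, p.2) - R t p.1⟫ = ∫ p, Real.exp (-ψ (t, p)) * g4 (t, p) := by
    congr 1; ext p
    congr 1
    rw [PiLp.inner_apply]
    refine Finset.sum_congr rfl fun i _ => ?_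
    simp
    ring
  have t3 : ∫ p : AuxE d × AuxE d, (∑ i, fderiv ℝ (fun q => F q i) (t, p) (auxdv i))
      * Real.exp (-ψ (t, p.1, p.2)) = ∫ p, Real.exp (-ψ (t, p)) * g3 (t, p) := by
    congr 1; ext p
    exact mul_comm _ _
  have t4 : ∫ p : AuxE d × AuxE d, Real.exp (-ψ (t, p.1, p.2)) *
      (∑ i, ∑ j, ((u t p.1 - p.2) i * (u t p.1 - p.2) j
      - if i = j then (1 : ℝ) else 0) * fderiv ℝ (fun q : AuxX d => u q.1 q.2.1 i) (t, p) (auxdx j))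
      = ∫ p, Real.exp (-ψ (t, p)) * g2 (t, p) := rfl
  rw [t2, t3, t4]
  field_simp
  ring
end
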